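/- arXiv:1305.2612 — 3 statements merged into one kernel-verified Lean document; each statement's English description precedes it below -/
import Mathlib

section
/- Let Γ be a countable group and let μ be a symmetric probability measure on Γ whose support generates Γ. Then there exists an isometric linear section σ : H_b^2(Γ) → Zℓ^∞(Γ³)^Γ of the canonical projection from Γ-invariant bounded 2-cocycles onto the second bounded cohomology H_b^2(Γ); moreover σ takes values in the Γ-invariant alternating μ-pluriharmonic cocycles. -/
noncomputable section

namespace GrpBC

/-- The sup-"norm" of a real valued function (the infimum of its bounds). -/
def supN {S : Type*} (f : S → ℝ) : ℝ := sInf {C : ℝ | 0 ≤ C ∧ ∀ s, |f s| ≤ C}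

/-- A group is amenable if it admits a left-invariant finitely additive
probability measure defined on all subsets. -/
def IsAmenable (G : Type*) [Group G] : Prop :=
  ∃ m : Set G → ℝ, (∀ A, 0 ≤ m A) ∧ m Set.univ = 1 ∧
    (∀ A B, Disjoint A B → m (A ∪ B) = m A + m B) ∧
    (∀ (g : G) (A : Set G), m ((g * ·) '' A) = m A)

/-- An amenable `Γ`-set: a (nonempty) set on which `Γ` acts with amenable stabilizers. -/
def IsAmenableAction (Γ : Type*) [Group Γ] (S : Type*) [MulAction Γ S] : Prop :=
  Nonempty S ∧ ∀ s : S, IsAmenable (MulAction.stabilizer Γ s)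

/-- The homogeneous coboundary operator on functions on `S^{n+1}`. -/
def gcob (S : Type*) (n : ℕ) : ((Fin (n + 1) → S) → ℝ) →ₗ[ℝ] ((Fin (n + 2) → S) → ℝ) where
  toFun f := fun g => ∑ i : Fin (n + 2), ((-1 : ℝ) ^ (i : ℕ)) * f (g ∘ i.succAbove)
  map_add' f g := by
    funext τ
    simp [mul_add, Finset.sum_add_distrib]
  map_smul' r f := by
    funext τ
    simp [Finset.mul_sum]
    congr 1
    funext i
    ring

/-- Bounded functions on `S^{n+1}` (the module `ℓ^∞(S^{n+1})`). -/
def bddF (S : Type*) (n : ℕ) : Submodule ℝ ((Fin (n + 1) → S) → ℝ) where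
  carrier := {f | ∃ C, ∀ g, |f g| ≤ C}
  zero_mem' := ⟨0, fun g => by simp⟩
  add_mem' := by
    rintro f g ⟨C, hC⟩ ⟨D, hD⟩
    exact ⟨C + D, fun τ => (abs_add_le _ _).trans (add_le_add (hC τ) (hD τ))⟩
  smul_mem' := by
    rintro r f ⟨C, hC⟩
    refine ⟨|r| * C, fun τ => ?_⟩
    calc |(r • f) τ| = |r| * |f τ| := by rw [Pi.smul_apply, smul_eq_mul, abs_mul]
    _ ≤ |r| * C := mul_le_mul_of_nonneg_left (hC τ) (abs_nonneg r)

/-- Alternating functions on `S^{n+1}`: they transform under permutations of the arguments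
according to the sign of the permutation. -/
def altF (S : Type*) (n : ℕ) : Submodule ℝ ((Fin (n + 1) → S) → ℝ) where
  carrier := {f | ∀ (g : Fin (n + 1) → S) (π : Equiv.Perm (Fin (n + 1))),
    f (g ∘ π) = ((Equiv.Perm.sign π : ℤ) : ℝ) * f g}
  zero_mem' := fun g π => by simp
  add_mem' := by
    intro f g hf hg τ π
    simp only [Pi.add_apply, hf τ π, hg τ π]
    ring
  smul_mem' := by
    intro r f hf τ π
    simp only [Pi.smul_apply, hf τ π, smul_eq_mul]
    ring

/-- `Γ`-invariant functions on `S^{n+1}` (for the diagonal action). -/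
def invF (Γ : Type*) [Group Γ] (S : Type*) [MulAction Γ S] (n : ℕ) :
    Submodule ℝ ((Fin (n + 1) → S) → ℝ) where
  carrier := {f | ∀ (γ : Γ) (g : Fin (n + 1) → S), f (fun i => γ • g i) = f g}
  zero_mem' := fun γ g => rfl
  add_mem' := by
    intro f g hf hg γ τ
    simp [Pi.add_apply, hf γ τ, hg γ τ]
  smul_mem' := by
    intro r f hf γ τ
    simp [Pi.smul_apply, hf γ τ]

variable (Γ : Type*) [Group Γ]

/-- Invariant bounded cochains of the homogeneous resolution of `Γ`. -/
def grpC (n : ℕ) : Submodule ℝ ((Fin (n + 1) → Γ) → ℝ) := bddF Γ n ⊓ invF Γ Γ n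

/-- Invariant bounded cocycles. -/
def grpZ (n : ℕ) : Submodule ℝ ((Fin (n + 1) → Γ) → ℝ) :=
  grpC Γ n ⊓ LinearMap.ker (gcob Γ n)

/-- Invariant bounded coboundaries. -/
def grpB : ∀ n : ℕ, Submodule ℝ ((Fin (n + 1) → Γ) → ℝ)
  | 0 => ⊥
  | (m + 1) => (grpC Γ m).map (gcob Γ m)

/-- The bounded cohomology `H_b^n(Γ)` of `Γ` with trivial real coefficients. -/
def Hb (n : ℕ) := grpZ Γ n ⧸ ((grpB Γ n).comap (grpZ Γ n).subtype)

instance (n : ℕ) : AddCommGroup (Hb Γ n) := Submodule.Quotient.addCommGroup _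
instance (n : ℕ) : Module ℝ (Hb Γ n) := Submodule.Quotient.module _

variable {Γ}

/-- The class of an invariant bounded cocycle in bounded cohomology. -/
def HbClass {n : ℕ} (f : grpZ Γ n) : Hb Γ n := Submodule.Quotient.mk f

/-- The canonical `ℓ^∞`-seminorm on bounded cohomology. -/
def hbNorm {n : ℕ} (φ : Hb Γ n) : ℝ :=
  sInf {r : ℝ | ∃ f : grpZ Γ n, HbClass f = φ ∧ r = supN f.1}

/-! ### Restriction maps -/

variable {Γ₁ : Type*} [Group Γ₁]

/-- Pullback of homogeneous cochains along a group homomorphism. -/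
def pbG (φ : Γ₁ →* Γ) (n : ℕ) : ((Fin (n + 1) → Γ) → ℝ) →ₗ[ℝ] ((Fin (n + 1) → Γ₁) → ℝ) where
  toFun f := fun g => f (fun i => φ (g i))
  map_add' f g := rfl
  map_smul' r f := rfl

lemma pbG_mem_grpZ (φ : Γ₁ →* Γ) (n : ℕ) {f : (Fin (n + 1) → Γ) → ℝ}
    (hf : f ∈ grpZ Γ n) : pbG φ n f ∈ grpZ Γ₁ n := by
  obtain ⟨⟨⟨C, hC⟩, hinv⟩, hker⟩ := hf
  refine ⟨⟨⟨C, fun g => hC _⟩, fun γ g => ?_⟩, ?_⟩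
  · show f (fun i => φ (γ * g i)) = f (fun i => φ (g i))
    have : (fun i => φ (γ * g i)) = fun i => φ γ • φ (g i) := by
      funext i
      simp [smul_eq_mul]
    rw [this]
    exact hinv (φ γ) (fun i => φ (g i))
  · have h0 : gcob Γ n f = 0 := hker
    show gcob Γ₁ n (pbG φ n f) = 0
    funext g
    have : gcob Γ₁ n (pbG φ n f) g = gcob Γ n f (fun i => φ (g i)) := by
      show (∑ i : Fin (n + 2), ((-1 : ℝ) ^ (i : ℕ)) * f (fun j => φ ((g ∘ i.succAbove) j)))
        = ∑ i : Fin (n + 2), ((-1 : ℝ) ^ (i : ℕ)) * f ((fun j => φ (g j)) ∘ i.succAbove)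
      rfl
    rw [this, h0]
    rfl

lemma pbG_mem_grpB (φ : Γ₁ →* Γ) (n : ℕ) {f : (Fin (n + 1) → Γ) → ℝ}
    (hf : f ∈ grpB Γ n) : pbG φ n f ∈ grpB Γ₁ n := by
  cases n with
  | zero =>
    have : f = 0 := hf
    simp [this, grpB]
  | succ m =>
    obtain ⟨u, ⟨⟨C, hC⟩, hinv⟩, rfl⟩ := hf
    refine ⟨pbG φ m u, ⟨⟨C, fun g => hC _⟩, fun γ g => ?_⟩, ?_⟩
    · show u (fun i => φ (γ * g i)) = u (fun i => φ (g i))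
      have : (fun i => φ (γ * g i)) = fun i => φ γ • φ (g i) := by
        funext i
        simp [smul_eq_mul]
      rw [this]
      exact hinv (φ γ) (fun i => φ (g i))
    · rfl

/-- The restriction map `H_b^n(Γ) → H_b^n(Γ₁)` induced by a group homomorphism
`Γ₁ → Γ`. -/
def hbRes (φ : Γ₁ →* Γ) (n : ℕ) : Hb Γ n →ₗ[ℝ] Hb Γ₁ n :=
  Submodule.mapQ _ _ ((pbG φ n).restrict (fun f hf => pbG_mem_grpZ φ n hf))
    (fun f hf => pbG_mem_grpB φ n hf)



/-! ### The complex of alternating bounded functions on a `Γ`-set -/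

variable (Γ : Type*) [Group Γ] (S : Type*) [MulAction Γ S]

/-- Invariant alternating bounded cochains on `S^{n+1}`:
`ℓ^∞_alt(S^{n+1})^Γ`. -/
def altC (n : ℕ) : Submodule ℝ ((Fin (n + 1) → S) → ℝ) :=
  (bddF S n ⊓ altF S n) ⊓ invF Γ S n

/-- Invariant alternating bounded cocycles `Zℓ^∞_alt(S^{n+1})^Γ`. -/
def ZS (n : ℕ) : Submodule ℝ ((Fin (n + 1) → S) → ℝ) :=
  altC Γ S n ⊓ LinearMap.ker (gcob S n)

/-- Coboundaries in the invariant alternating bounded complex. -/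
def BS : ∀ n : ℕ, Submodule ℝ ((Fin (n + 1) → S) → ℝ)
  | 0 => ⊥
  | (m + 1) => (altC Γ S m).map (gcob S m)

/-- The cohomology of the complex `ℓ^∞_alt(S^{•+1})^Γ`. -/
def HS (n : ℕ) := ZS Γ S n ⧸ ((BS Γ S n).comap (ZS Γ S n).subtype)

instance (n : ℕ) : AddCommGroup (HS Γ S n) := Submodule.Quotient.addCommGroup _
instance (n : ℕ) : Module ℝ (HS Γ S n) := Submodule.Quotient.module _

variable {Γ S}

/-- The class of a cocycle in the cohomology of `ℓ^∞_alt(S^{•+1})^Γ`. -/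
def HSClass {n : ℕ} (f : ZS Γ S n) : HS Γ S n := Submodule.Quotient.mk f

/-- The `ℓ^∞`-seminorm on the cohomology of `ℓ^∞_alt(S^{•+1})^Γ`. -/
def hsNorm {n : ℕ} (φ : HS Γ S n) : ℝ :=
  sInf {r : ℝ | ∃ f : ZS Γ S n, HSClass f = φ ∧ r = supN f.1}

/-- Pullback of cochains along the orbit map `g ↦ g • s₀`. -/
def pbOrb (s₀ : S) (n : ℕ) : ((Fin (n + 1) → S) → ℝ) →ₗ[ℝ] ((Fin (n + 1) → Γ) → ℝ) where
  toFun f := fun g => f (fun i => g i • s₀)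
  map_add' f g := rfl
  map_smul' r f := rfl

lemma pbOrb_mem_grpZ (s₀ : S) (n : ℕ) {f : (Fin (n + 1) → S) → ℝ}
    (hf : f ∈ ZS Γ S n) : pbOrb (Γ := Γ) s₀ n f ∈ grpZ Γ n := by
  obtain ⟨⟨⟨⟨C, hC⟩, -⟩, hinv⟩, hker⟩ := hf
  refine ⟨⟨⟨C, fun g => hC _⟩, fun γ g => ?_⟩, ?_⟩
  · show f (fun i => (γ * g i) • s₀) = f (fun i => g i • s₀)
    have : (fun i => (γ * g i) • s₀) = fun i => γ • (g i • s₀) := by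
      funext i
      rw [mul_smul]
    rw [this]
    exact hinv γ (fun i => g i • s₀)
  · have h0 : gcob S n f = 0 := hker
    show gcob Γ n (pbOrb (Γ := Γ) s₀ n f) = 0
    funext g
    have : gcob Γ n (pbOrb (Γ := Γ) s₀ n f) g = gcob S n f (fun i => g i • s₀) := rfl
    rw [this, h0]
    rfl

lemma pbOrb_mem_grpB (s₀ : S) (n : ℕ) {f : (Fin (n + 1) → S) → ℝ}
    (hf : f ∈ BS Γ S n) : pbOrb (Γ := Γ) s₀ n f ∈ grpB Γ n := by
  cases n with
  | zero =>
    have : f = 0 := hf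
    simp [this, grpB]
  | succ m =>
    obtain ⟨u, ⟨⟨⟨C, hC⟩, -⟩, hinv⟩, rfl⟩ := hf
    refine ⟨pbOrb (Γ := Γ) s₀ m u, ⟨⟨C, fun g => hC _⟩, fun γ g => ?_⟩, ?_⟩
    · show u (fun i => (γ * g i) • s₀) = u (fun i => g i • s₀)
      have : (fun i => (γ * g i) • s₀) = fun i => γ • (g i • s₀) := by
        funext i
        rw [mul_smul]
      rw [this]
      exact hinv γ (fun i => g i • s₀)
    · rfl

/-- The canonical map `Zℓ^∞_alt(S^{•+1})^Γ → H_b^•(Γ)` (realized by pulling back along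
the orbit map of a point `s₀ ∈ S`; for an amenable action the induced map does not depend
on this choice). -/
def canHb (s₀ : S) (n : ℕ) (f : ZS Γ S n) : Hb Γ n :=
  HbClass ⟨pbOrb (Γ := Γ) s₀ n f.1, pbOrb_mem_grpZ s₀ n f.2⟩

/-- The map `HS → H_b` induced in cohomology by pulling back along an orbit map. -/
def hsToHb (s₀ : S) (n : ℕ) : HS Γ S n →ₗ[ℝ] Hb Γ n :=
  Submodule.mapQ _ _ ((pbOrb (Γ := Γ) s₀ n).restrict (fun f hf => pbOrb_mem_grpZ s₀ n hf))
    (fun f hf => pbOrb_mem_grpB s₀ n hf)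

/-- `μ` is a symmetric probability measure on the countable group `Γ` whose support
generates `Γ`. -/
def IsSymmGenProb (Γ : Type*) [Group Γ] (μ : Γ → ℝ) : Prop :=
  (∀ g, 0 ≤ μ g) ∧ (∀ g, μ g⁻¹ = μ g) ∧ Summable μ ∧ (∑' g, μ g) = 1 ∧
    Subgroup.closure {g | μ g ≠ 0} = ⊤

/-- A bounded function on `Γ^{n+1}` is `μ`-pluriharmonic if it is invariant under
averaging each variable with respect to `μ`. -/
def IsPluriharmonic {Γ : Type*} [Group Γ] (μ : Γ → ℝ) {n : ℕ}
    (f : (Fin (n + 1) → Γ) → ℝ) : Prop :=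
  ∀ g : Fin (n + 1) → Γ,
    f g = ∑' γ : Fin (n + 1) → Γ, (∏ i, μ (γ i)) * f (fun i => g i * (γ i)⁻¹)

/-!
Let `m` be a `μ`-stationary mean on `Γ`: a Hahn–Banach functional invariant under the Markov
operator, which exists because `1` is a fixed vector of a contraction. Convolving a bounded cochain
with `m ⊗ ⋯ ⊗ m` commutes with the coboundary, is homotopic to the identity, does not increase the
norm, and produces functions that are harmonic in each variable.

The key input is double ergodicity: an invariant bounded function on `Γ²` that is harmonic in both
variables is constant. Writing it as `β (x⁻¹ * y)`, the function `β` is both left and right harmonic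
on `Γ`. Its variance `D = rightAvg μ (β ^ 2) - β ^ 2` is then nonnegative and left-subharmonic.
Since the left and the right random walk started at `1` have the same law, the values
`(leftAvg μ ^ k) D 1` are increasing in `k` and telescope to a bounded sum, so they vanish, and with
them `D`.

Hence the smoothing of a coboundary is a constant and so vanishes after its value at the identity is
subtracted. The same operation makes every smoothed cocycle `F` alternating, because
`F (x, y, x)` is harmonic in both variables and therefore constant. The result is half the
difference of two values of `F`, so the norm still does not increase.
-/

section FixedFunctional

variable {E : Type*} [SeminormedAddCommGroup E] [NormedSpace ℝ E] {T : E →L[ℝ] E}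

lemma nonpos_of_forall_nat_mul_le {a C : ℝ} (h : ∀ n : ℕ, n * a ≤ C) : a ≤ 0 := by
  by_contra! ha
  obtain ⟨n, hn⟩ := exists_lt_nsmul ha C
  exact (h n).not_gt (by simpa only [nsmul_eq_mul] using hn)

lemma norm_pow_apply_le (hT : ‖T‖ ≤ 1) (n : ℕ) (x : E) : ‖(T ^ n) x‖ ≤ ‖x‖ := by
  induction n with
  | zero => simp
  | succ n ih =>
    rw [pow_succ', mul_apply_eq_comp]
    exact (T.le_of_opNorm_le hT _).trans ((one_mul _).trans_le ih)

lemma norm_le_norm_sub_of_apply_eq_self (hT : ‖T‖ ≤ 1) {e : E} (he : T e = e) (h : E) :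
    ‖e‖ ≤ ‖e - (T h - h)‖ := by
  set x := e - (T h - h) with hx
  have sum_pow (n : ℕ) : (n : ℝ) • e = ∑ k ∈ Finset.range n, (T ^ k) x + ((T ^ n) h - h) := by
    have hpow (k : ℕ) : (T ^ k) e = e := by
      induction k with
      | zero => rfl
      | succ k ih => rw [pow_succ, mul_apply_eq_comp, he, ih]
    have hterm (k : ℕ) : (T ^ k) x = e - ((T ^ (k + 1)) h - (T ^ k) h) := by
      rw [hx, map_sub, map_sub, hpow, pow_succ, mul_apply_eq_comp]
    induction n with
    | zero => simp
    | succ n ih =>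
      rw [Nat.cast_succ, add_smul, one_smul, ih, Finset.sum_range_succ, hterm]
      abel
  refine sub_nonpos.mp (nonpos_of_forall_nat_mul_le (C := 2 * ‖h‖) fun n => ?_)
  have bound : n * ‖e‖ ≤ n * ‖x‖ + (‖h‖ + ‖h‖) :=
    calc n * ‖e‖ = ‖(n : ℝ) • e‖ := by rw [norm_smul, Real.norm_natCast]
      _ ≤ ∑ k ∈ Finset.range n, ‖(T ^ k) x‖ + (‖(T ^ n) h‖ + ‖h‖) := by
        rw [sum_pow]
        exact (norm_add_le _ _).trans (add_le_add (norm_sum_le _ _) (norm_sub_le _ _))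
      _ ≤ ∑ _k ∈ Finset.range n, ‖x‖ + (‖h‖ + ‖h‖) := by
        gcongr <;> exact norm_pow_apply_le hT _ _
      _ = n * ‖x‖ + (‖h‖ + ‖h‖) := by simp
  linarith

lemma exists_dual_eq_norm_apply_comp_eq (hT : ‖T‖ ≤ 1) {e : E} (he : T e = e) :
    ∃ Λ : StrongDual ℝ E, ‖Λ‖ ≤ 1 ∧ Λ e = ‖e‖ ∧ ∀ x, Λ (T x) = Λ x := by
  let R := LinearMap.range ((T : E →ₗ[ℝ] E) - LinearMap.id)
  have norm_mkQ : ‖R.mkQ e‖ = ‖e‖ := by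
    refine le_antisymm (Submodule.Quotient.norm_mk_le _ _) ?_
    refine QuotientAddGroup.le_norm_iff.mpr fun y hy => ?_
    obtain ⟨h, hh⟩ : e - y ∈ R := (Submodule.Quotient.eq R).mp hy.symm
    have : y = e - (T h - h) := by rw [show T h - h = e - y from hh]; abel
    exact this ▸ norm_le_norm_sub_of_apply_eq_self hT he h
  obtain ⟨Φ, hΦ, hΦe⟩ := exists_dual_vector'' ℝ (R.mkQ e)
  refine ⟨LinearMap.mkContinuous (Φ.toLinearMap ∘ₗ R.mkQ) 1 fun x => ?_,
    LinearMap.mkContinuous_norm_le _ zero_le_one _, ?_, fun x => ?_⟩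
  · exact (Φ.le_of_opNorm_le hΦ _).trans (by gcongr; exact Submodule.Quotient.norm_mk_le _ _)
  · exact hΦe.trans norm_mkQ
  · exact congrArg Φ ((Submodule.Quotient.eq R).mpr ⟨x, rfl⟩)

end FixedFunctional

section MarkovOperator

open BoundedContinuousFunction (compContinuousCLM evalCLM)
open scoped BoundedContinuousFunction

variable {ι κ : Type*} {w : ι → ℝ}

/-- Probability weights on an index type: the discrete form of a probability measure. -/
structure IsProbWeight (w : ι → ℝ) : Prop where
  nonneg : ∀ i, 0 ≤ w i
  hasSum : HasSum w 1

/-- The average `∑ i, w i • S i` of a family of operators, used for probability weights `w` and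
contractions `S i`; the sum then converges in operator norm. -/
def avgOp {E : Type*} [NormedAddCommGroup E] [NormedSpace ℝ E] (w : ι → ℝ) (S : ι → E →L[ℝ] E) :
    E →L[ℝ] E :=
  ∑' i, w i • S i

section AvgOp

variable {E : Type*} [NormedAddCommGroup E] [NormedSpace ℝ E] {S : ι → E →L[ℝ] E}

lemma commute_avgOp {T : E →L[ℝ] E} (h : ∀ i, Commute (S i) T) (w : ι → ℝ) :
    Commute (avgOp w S) T :=
  Commute.tsum_left _ fun i => (h i).smul_left (w i)

namespace IsProbWeight

lemma norm_smul_le (hw : IsProbWeight w) {x : ι → E} {C : ℝ} (hx : ∀ i, ‖x i‖ ≤ C) (i : ι) :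
    ‖w i • x i‖ ≤ w i * C := by
  rw [norm_smul, Real.norm_of_nonneg (hw.nonneg i)]
  exact mul_le_mul_of_nonneg_left (hx i) (hw.nonneg i)

lemma summable_smul [CompleteSpace E] (hw : IsProbWeight w) {x : ι → E} {C : ℝ}
    (hx : ∀ i, ‖x i‖ ≤ C) : Summable fun i => w i • x i :=
  (hw.hasSum.summable.mul_right C).of_norm_bounded (hw.norm_smul_le hx)

lemma norm_avgOp_le (hw : IsProbWeight w) (hS : ∀ i, ‖S i‖ ≤ 1) : ‖avgOp w S‖ ≤ 1 :=
  (tsum_of_norm_bounded (hw.hasSum.mul_right 1) (hw.norm_smul_le hS)).trans_eq (one_mul 1)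

lemma hasSum_avgOp_apply [CompleteSpace E] (hw : IsProbWeight w) (hS : ∀ i, ‖S i‖ ≤ 1) (x : E) :
    HasSum (fun i => w i • S i x) (avgOp w S x) :=
  (hw.summable_smul hS).hasSum.mapL (ContinuousLinearMap.apply ℝ E x)

end IsProbWeight

end AvgOp

variable {X : Type*} [TopologicalSpace X]

lemma norm_compContinuousCLM_le (φ : C(X, X)) : ‖compContinuousCLM ℝ ℝ φ‖ ≤ 1 :=
  ContinuousLinearMap.opNorm_le_bound _ zero_le_one fun f =>
    (f.norm_compContinuous_le φ).trans_eq (one_mul _).symm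

/-- The Markov operator `f ↦ ∑ i, w i • (f ∘ φ i)` on bounded continuous functions of the random
walk that moves by `φ i` with probability `w i`. -/
def markovOp (w : ι → ℝ) (φ : ι → C(X, X)) : (X →ᵇ ℝ) →L[ℝ] (X →ᵇ ℝ) :=
  avgOp w fun i => compContinuousCLM ℝ ℝ (φ i)

lemma commute_markovOp_compContinuousCLM {φ : ι → C(X, X)} {ψ : C(X, X)}
    (h : ∀ i, (φ i).comp ψ = ψ.comp (φ i)) (w : ι → ℝ) :
    Commute (markovOp w φ) (compContinuousCLM ℝ ℝ ψ) :=
  commute_avgOp (fun i => by ext f x; exact congrArg f (DFunLike.congr_fun (h i) x).symm) w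

lemma commute_markovOp {φ : ι → C(X, X)} {ψ : κ → C(X, X)}
    (h : ∀ i j, (φ i).comp (ψ j) = (ψ j).comp (φ i)) (w : ι → ℝ) (v : κ → ℝ) :
    Commute (markovOp w φ) (markovOp v ψ) :=
  (commute_avgOp (fun j => (commute_markovOp_compContinuousCLM (fun i => h i j) w).symm) v).symm

namespace IsProbWeight

lemma norm_markovOp_le (hw : IsProbWeight w) (φ : ι → C(X, X)) : ‖markovOp w φ‖ ≤ 1 :=
  hw.norm_avgOp_le fun i => norm_compContinuousCLM_le (φ i)

lemma hasSum_markovOp_apply (hw : IsProbWeight w) (φ : ι → C(X, X)) (f : X →ᵇ ℝ) (x : X) :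
    HasSum (fun i => w i * f (φ i x)) (markovOp w φ f x) :=
  (hw.hasSum_avgOp_apply (fun i => norm_compContinuousCLM_le (φ i)) f).mapL (evalCLM ℝ x)

lemma markovOp_one (hw : IsProbWeight w) (φ : ι → C(X, X)) : markovOp w φ 1 = 1 := by
  ext x
  refine (hw.hasSum_markovOp_apply φ 1 x).unique ?_
  simpa using hw.hasSum

lemma markovOp_mono (hw : IsProbWeight w) (φ : ι → C(X, X)) : Monotone (markovOp w φ) :=
  fun f g hfg x => hasSum_le (fun i => mul_le_mul_of_nonneg_left (hfg (φ i x)) (hw.nonneg i))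
    (hw.hasSum_markovOp_apply φ f x) (hw.hasSum_markovOp_apply φ g x)

lemma apply_eq_zero_of_markovOp_apply_eq_zero (hw : IsProbWeight w) {φ : ι → C(X, X)}
    {f : X →ᵇ ℝ} (hf : 0 ≤ f) {x : X} (h : markovOp w φ f x = 0) {i : ι} (hi : w i ≠ 0) :
    f (φ i x) = 0 := by
  have hsum := hw.hasSum_markovOp_apply φ f x
  have hnonneg (j : ι) : 0 ≤ w j * f (φ j x) := mul_nonneg (hw.nonneg j) (hf _)
  rw [h, hasSum_zero_iff_of_nonneg hnonneg] at hsum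
  exact (mul_eq_zero.mp (congrFun hsum i)).resolve_left hi

lemma hasSum_sq_sub (hw : IsProbWeight w) {φ : ι → C(X, X)} {f : X →ᵇ ℝ}
    (hf : markovOp w φ f = f) :
    HasSum (fun i => w i • (f.compContinuous (φ i) - f) ^ 2) (markovOp w φ (f ^ 2) - f ^ 2) := by
  have hasSum_comp (g : X →ᵇ ℝ) :
      HasSum (fun i => w i • g.compContinuous (φ i)) (markovOp w φ g) :=
    hw.hasSum_avgOp_apply (fun i => norm_compContinuousCLM_le (φ i)) g
  have hsum := ((hasSum_comp (f ^ 2)).sub ((hasSum_comp f).mul_left (2 * f))).add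
    (hw.hasSum.smul_const (f ^ 2))
  have hexpand (i : ι) : w i • (f.compContinuous (φ i) - f) ^ 2 =
      w i • (f ^ 2).compContinuous (φ i) - 2 * f * w i • f.compContinuous (φ i) + w i • f ^ 2 := by
    ext x
    simp only [BoundedContinuousFunction.coe_smul, BoundedContinuousFunction.pow_apply,
      BoundedContinuousFunction.sub_apply, BoundedContinuousFunction.add_apply,
      BoundedContinuousFunction.mul_apply, BoundedContinuousFunction.compContinuous_apply,
      BoundedContinuousFunction.coe_ofNat, Pi.ofNat_apply, smul_eq_mul]
    ring
  have hlim : markovOp w φ (f ^ 2) - f ^ 2 =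
      markovOp w φ (f ^ 2) - 2 * f * markovOp w φ f + (1 : ℝ) • f ^ 2 := by
    rw [hf, one_smul]
    ring
  simpa only [hexpand, hlim] using hsum

lemma hasSum_sq_sub_apply (hw : IsProbWeight w) {φ : ι → C(X, X)} {f : X →ᵇ ℝ}
    (hf : markovOp w φ f = f) (x : X) :
    HasSum (fun i => w i * (f (φ i x) - f x) ^ 2) ((markovOp w φ (f ^ 2) - f ^ 2) x) :=
  (hw.hasSum_sq_sub hf).mapL (evalCLM ℝ x)

lemma sq_le_markovOp_sq (hw : IsProbWeight w) {φ : ι → C(X, X)} {f : X →ᵇ ℝ}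
    (hf : markovOp w φ f = f) : f ^ 2 ≤ markovOp w φ (f ^ 2) := fun x =>
  sub_nonneg.mp <| (hw.hasSum_sq_sub_apply hf x).nonneg
    fun i => mul_nonneg (hw.nonneg i) (sq_nonneg _)

end IsProbWeight

end MarkovOperator

section DoubleErgodicity

open BoundedContinuousFunction (compContinuousCLM evalCLM)
open scoped BoundedContinuousFunction

namespace IsSymmGenProb

variable {G : Type*} [Group G] {μ : G → ℝ}

lemma isProbWeight (hμ : IsSymmGenProb G μ) : IsProbWeight μ :=
  ⟨hμ.1, hμ.2.2.2.1 ▸ hμ.2.2.1.hasSum⟩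

lemma symm (hμ : IsSymmGenProb G μ) (s : G) : μ s⁻¹ = μ s := hμ.2.1 s

lemma closure_eq_top (hμ : IsSymmGenProb G μ) : Subgroup.closure {s | μ s ≠ 0} = ⊤ :=
  hμ.2.2.2.2

end IsSymmGenProb

variable {G : Type*} [Group G] [TopologicalSpace G] [ContinuousMul G] {μ : G → ℝ}

/-- The Markov operator `f ↦ (x ↦ ∑ s, μ s * f (s * x))` of the left random walk on a group. -/
def leftAvg (μ : G → ℝ) : (G →ᵇ ℝ) →L[ℝ] (G →ᵇ ℝ) :=
  markovOp μ ContinuousMap.mulLeft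

/-- The Markov operator `f ↦ (x ↦ ∑ s, μ s * f (x * s))` of the right random walk on a group. -/
def rightAvg (μ : G → ℝ) : (G →ᵇ ℝ) →L[ℝ] (G →ᵇ ℝ) :=
  markovOp μ ContinuousMap.mulRight

lemma commute_leftAvg_rightAvg (μ : G → ℝ) : Commute (leftAvg μ) (rightAvg μ) :=
  commute_markovOp (fun s t => ContinuousMap.ext fun x => (mul_assoc s x t).symm) μ μ

lemma IsProbWeight.leftAvg_apply (hμ : IsProbWeight μ) (f : G →ᵇ ℝ) (x : G) :
    leftAvg μ f x = ∑' s, μ s * f (s * x) :=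
  (hμ.hasSum_markovOp_apply ContinuousMap.mulLeft f x).tsum_eq.symm

lemma IsProbWeight.rightAvg_apply (hμ : IsProbWeight μ) (f : G →ᵇ ℝ) (x : G) :
    rightAvg μ f x = ∑' s, μ s * f (x * s) :=
  (hμ.hasSum_markovOp_apply ContinuousMap.mulRight f x).tsum_eq.symm

lemma leftAvg_apply_one (hμ : IsProbWeight μ) (f : G →ᵇ ℝ) : leftAvg μ f 1 = rightAvg μ f 1 := by
  simp only [hμ.leftAvg_apply, hμ.rightAvg_apply, mul_one, one_mul]

lemma leftAvg_pow_apply_one (hμ : IsProbWeight μ) (n : ℕ) (f : G →ᵇ ℝ) :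
    (leftAvg μ ^ n) f 1 = (rightAvg μ ^ n) f 1 := by
  induction n generalizing f with
  | zero => rfl
  | succ n ih =>
    have hcomm : rightAvg μ ^ n * leftAvg μ = leftAvg μ * rightAvg μ ^ n :=
      ((commute_leftAvg_rightAvg μ).pow_right n).symm
    calc (leftAvg μ ^ (n + 1)) f 1 = (rightAvg μ ^ n) (leftAvg μ f) 1 := by
          rw [pow_succ, mul_apply_eq_comp, ih]
      _ = leftAvg μ ((rightAvg μ ^ n) f) 1 := by
          rw [← mul_apply_eq_comp, hcomm, mul_apply_eq_comp]
      _ = (rightAvg μ ^ (n + 1)) f 1 := by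
          rw [leftAvg_apply_one hμ, pow_succ', mul_apply_eq_comp]

lemma leftAvg_pow_rightAvg_sub_apply_one_eq_zero (hμ : IsProbWeight μ) {h : G →ᵇ ℝ}
    (nonneg : 0 ≤ rightAvg μ h - h)
    (subharmonic : rightAvg μ h - h ≤ leftAvg μ (rightAvg μ h - h)) (j : ℕ) :
    (leftAvg μ ^ j) (rightAvg μ h - h) 1 = 0 := by
  set D := rightAvg μ h - h with hD
  have mono : Monotone fun k => (leftAvg μ ^ k) D := monotone_nat_of_le_succ fun k => by
    induction k with
    | zero => simpa using subharmonic
    | succ k ih =>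
      rw [pow_succ', pow_succ' _ (k + 1), mul_apply_eq_comp, mul_apply_eq_comp]
      exact hμ.markovOp_mono _ ih
  have increment (k : ℕ) : (leftAvg μ ^ k) D 1 =
      (rightAvg μ ^ (k + 1)) h 1 - (rightAvg μ ^ k) h 1 := by
    rw [leftAvg_pow_apply_one hμ, hD, map_sub, pow_succ, mul_apply_eq_comp]
    rfl
  have abs_le (k : ℕ) : |(rightAvg μ ^ k) h 1| ≤ ‖h‖ :=
    (((rightAvg μ ^ k) h).norm_coe_le_norm 1).trans
      (norm_pow_apply_le (hμ.norm_markovOp_le _) k h)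
  refine le_antisymm (nonpos_of_forall_nat_mul_le (C := ‖h‖ + ‖h‖) fun n => ?_)
    ((show (0 : ℝ) ≤ D 1 from nonneg 1).trans (mono j.zero_le 1))
  calc n * (leftAvg μ ^ j) D 1
      = ∑ _k ∈ Finset.range n, (leftAvg μ ^ j) D 1 := by simp
    _ ≤ ∑ k ∈ Finset.range n, (leftAvg μ ^ (j + k)) D 1 :=
      Finset.sum_le_sum fun k _ => mono (j.le_add_right k) 1
    _ = (rightAvg μ ^ (j + n)) h 1 - (rightAvg μ ^ j) h 1 := by
      simp only [increment]
      exact Finset.sum_range_sub (fun k => (rightAvg μ ^ (j + k)) h 1) n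
    _ ≤ ‖h‖ + ‖h‖ := by
      linarith [le_of_abs_le (abs_le (j + n)), neg_le_of_abs_le (abs_le j)]

lemma eq_zero_of_forall_leftAvg_pow_apply_one_eq_zero (hμ : IsSymmGenProb G μ) {D : G →ᵇ ℝ}
    (nonneg : 0 ≤ D) (hD : ∀ j, (leftAvg μ ^ j) D 1 = 0) : D = 0 := by
  have pow_nonneg (j : ℕ) : 0 ≤ (leftAvg μ ^ j) D := by
    induction j with
    | zero => exact nonneg
    | succ j ih =>
      rw [pow_succ', mul_apply_eq_comp, ← map_zero (leftAvg μ)]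
      exact hμ.isProbWeight.markovOp_mono _ ih
  have step {s y : G} (hs : μ s ≠ 0) (hy : ∀ j, (leftAvg μ ^ j) D y = 0) (j : ℕ) :
      (leftAvg μ ^ j) D (s * y) = 0 :=
    hμ.isProbWeight.apply_eq_zero_of_markovOp_apply_eq_zero (φ := ContinuousMap.mulLeft)
      (pow_nonneg j) (by simpa [pow_succ', leftAvg] using hy (j + 1)) hs
  have all_zero (x : G) : ∀ j, (leftAvg μ ^ j) D x = 0 := by
    have hx : x ∈ Subgroup.closure {s | μ s ≠ 0} := hμ.closure_eq_top ▸ Subgroup.mem_top x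
    induction hx using Subgroup.closure_induction_left with
    | one => exact hD
    | mul_left s hs y _ ih => exact step hs ih
    | inv_mul_cancel s hs y _ ih => exact step (by rwa [hμ.symm]) ih
  exact BoundedContinuousFunction.ext fun x => all_zero x 0

-- Each right increment `x ↦ β (x * s) - β x` is again left-harmonic, so its square is
-- left-subharmonic, and `rightAvg μ (β ^ 2) - β ^ 2` is an average of these squares.
lemma rightAvg_sq_sub_sq_le_leftAvg (hμ : IsProbWeight μ) {β : G →ᵇ ℝ}
    (hleft : leftAvg μ β = β) (hright : rightAvg μ β = β) :
    rightAvg μ (β ^ 2) - β ^ 2 ≤ leftAvg μ (rightAvg μ (β ^ 2) - β ^ 2) := fun x => by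
  let δ (s : G) : G →ᵇ ℝ := β.compContinuous (ContinuousMap.mulRight s) - β
  have harmonic (s : G) : leftAvg μ (δ s) = δ s := by
    have hcomm : Commute (leftAvg μ) (compContinuousCLM ℝ ℝ (ContinuousMap.mulRight s)) :=
      commute_markovOp_compContinuousCLM (φ := ContinuousMap.mulLeft)
        (ψ := ContinuousMap.mulRight s)
        (fun t => ContinuousMap.ext fun y => (mul_assoc t y s).symm) μ
    have htranslate : leftAvg μ (β.compContinuous (ContinuousMap.mulRight s)) =
        β.compContinuous (ContinuousMap.mulRight s) := by
      simpa [hleft] using DFunLike.congr_fun hcomm.eq β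
    rw [map_sub, hleft, htranslate]
  have hasSum_sq : HasSum (fun s => μ s • δ s ^ 2) (rightAvg μ (β ^ 2) - β ^ 2) :=
    hμ.hasSum_sq_sub hright
  have hasSum_apply := hasSum_sq.mapL (evalCLM ℝ x)
  have hasSum_leftAvg_apply := hasSum_sq.mapL ((evalCLM ℝ x).comp (leftAvg μ))
  refine hasSum_le (fun s => ?_) hasSum_apply hasSum_leftAvg_apply
  rw [map_smul, map_smul]
  exact mul_le_mul_of_nonneg_left (hμ.sq_le_markovOp_sq (harmonic s) x) (hμ.nonneg s)

theorem eq_apply_one_of_leftAvg_eq_of_rightAvg_eq (hμ : IsSymmGenProb G μ) {β : G →ᵇ ℝ}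
    (hleft : leftAvg μ β = β) (hright : rightAvg μ β = β) (x : G) : β x = β 1 := by
  have hw := hμ.isProbWeight
  have nonneg : 0 ≤ rightAvg μ (β ^ 2) - β ^ 2 :=
    fun y => sub_nonneg.mpr (hw.sq_le_markovOp_sq hright y)
  have variance_eq_zero : rightAvg μ (β ^ 2) - β ^ 2 = 0 :=
    eq_zero_of_forall_leftAvg_pow_apply_one_eq_zero hμ nonneg
      (leftAvg_pow_rightAvg_sub_apply_one_eq_zero hw nonneg
        (rightAvg_sq_sub_sq_le_leftAvg hw hleft hright))
  have invariant {s : G} (hs : μ s ≠ 0) (y : G) : β (y * s) = β y := by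
    have apply_eq_zero : (rightAvg μ (β ^ 2) - β ^ 2) y = 0 := DFunLike.congr_fun variance_eq_zero y
    have hsum : HasSum (fun s => μ s * (β (y * s) - β y) ^ 2) 0 :=
      apply_eq_zero ▸ hw.hasSum_sq_sub_apply hright y
    rw [hasSum_zero_iff_of_nonneg fun s => mul_nonneg (hw.nonneg s) (sq_nonneg _)] at hsum
    simpa [hs, sub_eq_zero] using congrFun hsum s
  have hx : x ∈ Subgroup.closure {s | μ s ≠ 0} := hμ.closure_eq_top ▸ Subgroup.mem_top x
  suffices ∀ y, β (y * x) = β y by simpa using this 1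
  induction hx using Subgroup.closure_induction with
  | mem s hs => exact invariant hs
  | one => simp
  | mul s t _ _ ihs iht => exact fun y => by rw [← mul_assoc, iht, ihs]
  | inv s _ ih => exact fun y => by rw [← ih, inv_mul_cancel_right]

end DoubleErgodicity

section Mean

open BoundedContinuousFunction (ofNormedAddCommGroupDiscrete)
open scoped BoundedContinuousFunction

variable {ι α : Type*}

/-- A mean (finitely additive probability) on `α`. Only its values on bounded functions are
meaningful; it is extended linearly to all functions so that linearity needs no side conditions. -/
structure IsMean (m : (α → ℝ) →ₗ[ℝ] ℝ) : Prop where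
  map_one : m 1 = 1
  abs_le : ∀ {f : α → ℝ} {C : ℝ}, (∀ a, |f a| ≤ C) → |m f| ≤ C

/-- The inclusion of bounded continuous functions into all functions, along which means on bounded
functions are extended. -/
def coeBCF (α : Type*) [TopologicalSpace α] : (α →ᵇ ℝ) →ₗ[ℝ] (α → ℝ) :=
  ContinuousMap.coeFnLinearMap ℝ ∘ₗ BoundedContinuousFunction.toContinuousMapLinearMap α ℝ ℝ

lemma exists_linearMap_comp_coeBCF_eq [TopologicalSpace α] (Λ : (α →ᵇ ℝ) →ₗ[ℝ] ℝ) :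
    ∃ m : (α → ℝ) →ₗ[ℝ] ℝ, m ∘ₗ coeBCF α = Λ := by
  obtain ⟨p, hp⟩ := (coeBCF α).exists_leftInverse_of_injective
    (LinearMap.ker_eq_bot.mpr DFunLike.coe_injective)
  exact ⟨Λ ∘ₗ p, by rw [LinearMap.comp_assoc, hp, LinearMap.comp_id]⟩

namespace IsMean

variable {m : (α → ℝ) →ₗ[ℝ] ℝ}

lemma map_const (hm : IsMean m) (c : ℝ) : (m fun _ => c) = c := by
  have : (fun _ => c) = c • (1 : α → ℝ) := by ext; simp
  rw [this, map_smul, hm.map_one, smul_eq_mul, mul_one]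

lemma hasSum_mul {w : ι → ℝ} (hm : IsMean m) (hw : IsProbWeight w) {F : ι → α → ℝ} {C : ℝ}
    (hF : ∀ i a, |F i a| ≤ C) :
    HasSum (fun i => w i * m (F i)) (m fun a => ∑' i, w i * F i a) := by
  let _ : TopologicalSpace α := ⊥
  have : DiscreteTopology α := ⟨rfl⟩
  let M : StrongDual ℝ (α →ᵇ ℝ) := (m ∘ₗ coeBCF α).mkContinuous 1
    fun f => (hm.abs_le f.norm_coe_le_norm).trans_eq (one_mul _).symm
  let B (i : ι) : α →ᵇ ℝ := ofNormedAddCommGroupDiscrete (F i) C (hF i)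
  have hasSum_B := (hw.summable_smul (x := B) (C := |C|) fun i =>
    (BoundedContinuousFunction.norm_le (abs_nonneg C)).mpr
      fun a => (hF i a).trans (le_abs_self C)).hasSum
  have coe_tsum : ⇑(∑' i, w i • B i) = fun a => ∑' i, w i * F i a :=
    funext fun a => (hasSum_B.mapL (BoundedContinuousFunction.evalCLM ℝ a)).tsum_eq.symm
  have hasSum_M : HasSum (fun i => M (w i • B i)) (m fun a => ∑' i, w i * F i a) :=
    coe_tsum ▸ hasSum_B.mapL M
  simp only [map_smul, smul_eq_mul] at hasSum_M
  exact hasSum_M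

end IsMean

/-- A mean that is invariant under averaging over left translations by `μ`-random elements. -/
def IsStationary {G : Type*} [Group G] (μ : G → ℝ) (m : (G → ℝ) →ₗ[ℝ] ℝ) : Prop :=
  ∀ {f : G → ℝ} {C : ℝ}, (∀ a, |f a| ≤ C) → (m fun a => ∑' s, μ s * f (s * a)) = m f

theorem exists_isMean_isStationary {G : Type*} [Group G] {μ : G → ℝ} (hμ : IsProbWeight μ) :
    ∃ m : (G → ℝ) →ₗ[ℝ] ℝ, IsMean m ∧ IsStationary μ m := by
  let _ : TopologicalSpace G := ⊥
  have : DiscreteTopology G := ⟨rfl⟩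
  obtain ⟨Λ, norm_le, map_one, invariant⟩ :=
    exists_dual_eq_norm_apply_comp_eq (hμ.norm_markovOp_le _)
      (hμ.markovOp_one ContinuousMap.mulLeft)
  obtain ⟨m, comp_coe⟩ := exists_linearMap_comp_coeBCF_eq Λ.toLinearMap
  have hm (F : G →ᵇ ℝ) : m F = Λ F := LinearMap.congr_fun comp_coe F
  refine ⟨m, ⟨?_, fun {f C} hf => ?_⟩, fun {f C} hf => ?_⟩
  · exact (hm 1).trans (map_one.trans norm_one)
  · let F := ofNormedAddCommGroupDiscrete f C hf
    have hC : 0 ≤ C := (abs_nonneg _).trans (hf 1)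
    calc |m f| = ‖Λ F‖ := congrArg abs (hm F)
      _ ≤ 1 * ‖F‖ := Λ.le_of_opNorm_le norm_le F
      _ ≤ C := (one_mul ‖F‖).trans_le ((BoundedContinuousFunction.norm_le hC).mpr hf)
  · let F := ofNormedAddCommGroupDiscrete f C hf
    have coe_leftAvg : ⇑(leftAvg μ F) = fun a => ∑' s, μ s * f (s * a) :=
      funext (hμ.leftAvg_apply F)
    calc (m fun a => ∑' s, μ s * f (s * a)) = Λ (leftAvg μ F) := coe_leftAvg ▸ hm _
      _ = m f := (invariant F).trans (hm F).symm

end Mean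

section PiMean

variable {α : Type*} {m : (α → ℝ) →ₗ[ℝ] ℝ}

/-- The product mean `m ⊗ ⋯ ⊗ m` on `n`-tuples: integrate the last variable first. -/
def piMean (m : (α → ℝ) →ₗ[ℝ] ℝ) : (n : ℕ) → ((Fin n → α) → ℝ) →ₗ[ℝ] ℝ
  | 0 => LinearMap.proj Fin.elim0
  | n + 1 => m ∘ₗ LinearMap.pi fun a =>
      piMean m n ∘ₗ LinearMap.funLeft ℝ ℝ (Fin.cons (α := fun _ => α) a)

lemma piMean_succ (n : ℕ) (f : (Fin (n + 1) → α) → ℝ) :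
    piMean m (n + 1) f = m fun a => piMean m n fun v => f (Fin.cons a v) := rfl

lemma IsMean.isMean_piMean (hm : IsMean m) (n : ℕ) : IsMean (piMean m n) := by
  induction n with
  | zero => exact ⟨rfl, fun hf => hf _⟩
  | succ n ih =>
    refine ⟨?_, fun hf => hm.abs_le fun a => ih.abs_le fun v => hf _⟩
    exact (congrArg m (funext fun _ => ih.map_one)).trans hm.map_one

lemma IsMean.piMean_comp_succAbove (hm : IsMean m) {n : ℕ} (i : Fin (n + 1))
    (f : (Fin n → α) → ℝ) :
    piMean m (n + 1) (fun v => f (v ∘ i.succAbove)) = piMean m n f := by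
  induction n with
  | zero =>
    simp only [Fin.fin_one_eq_zero i, Fin.succAbove_zero, piMean_succ, Fin.cons_comp_succ]
    exact hm.map_const _
  | succ n ih =>
    cases i using Fin.cases with
    | zero =>
      simp only [Fin.succAbove_zero, piMean_succ (n + 1), Fin.cons_comp_succ]
      exact hm.map_const _
    | succ i =>
      simp only [piMean_succ n f, piMean_succ (n + 1), Fin.cons_comp_succ_succAbove]
      exact congrArg m (funext fun a => ih i fun v => f (Fin.cons a v))

end PiMean

section Harmonic

open Function (update)

variable {G : Type*} [Group G] {μ : G → ℝ} {n : ℕ} {f : (Fin n → G) → ℝ} {C : ℝ}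

/-- `f` is `μ`-harmonic in its `i`-th variable. Right multiplication by `s` instead of `s⁻¹` makes
no difference for symmetric `μ`. -/
def IsHarmonicIn (μ : G → ℝ) (i : Fin n) (f : (Fin n → G) → ℝ) : Prop :=
  ∀ x, HasSum (fun s => μ s * f (update x i (x i * s))) (f x)

namespace IsHarmonicIn

variable {g : (Fin n → G) → ℝ} {i : Fin n}

lemma add (hf : IsHarmonicIn μ i f) (hg : IsHarmonicIn μ i g) :
    IsHarmonicIn μ i fun x => f x + g x := fun x => by
  simpa only [mul_add] using (hf x).add (hg x)

lemma sub_const (hf : IsHarmonicIn μ i f) (hμ : IsProbWeight μ) (c : ℝ) :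
    IsHarmonicIn μ i fun x => f x - c := fun x => by
  simpa only [mul_sub, one_mul] using (hf x).sub (hμ.hasSum.mul_right c)

end IsHarmonicIn

lemma hasSum_cons_iff {ι : Type*} {F : (Fin (n + 1) → ι) → ℝ} {a : ℝ} :
    HasSum (fun p : ι × (Fin n → ι) => F (Fin.cons p.1 p.2)) a ↔ HasSum F a :=
  (Fin.consEquiv fun _ => ι).hasSum_iff

lemma IsProbWeight.pi {ι : Type*} {w : ι → ℝ} (hw : IsProbWeight w) (n : ℕ) :
    IsProbWeight fun γ : Fin n → ι => ∏ i, w (γ i) where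
  nonneg γ := Finset.prod_nonneg fun i _ => hw.nonneg (γ i)
  hasSum := by
    induction n with
    | zero => simp
    | succ n ih =>
      let W (γ : Fin n → ι) : ℝ := ∏ i, w (γ i)
      have hasSum_W : HasSum W 1 := ih
      have nonneg (γ : Fin n → ι) : 0 ≤ W γ := Finset.prod_nonneg fun i _ => hw.nonneg (γ i)
      have hasSum_mul := hw.hasSum.mul hasSum_W
        (hw.hasSum.summable.mul_of_nonneg hasSum_W.summable hw.nonneg nonneg)
      refine hasSum_cons_iff.mp ?_
      simpa only [Fin.prod_univ_succ, Fin.cons_zero, Fin.cons_succ, mul_one] using hasSum_mul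

lemma IsProbWeight.hasSum_prod_mul_of_isHarmonicIn (hμ : IsProbWeight μ) (hf : ∀ x, |f x| ≤ C)
    (h : ∀ i, IsHarmonicIn μ i f) (x : Fin n → G) :
    HasSum (fun γ : Fin n → G => (∏ i, μ (γ i)) * f (x * γ)) (f x) := by
  induction n with
  | zero => simp [Subsingleton.elim (x * _) x]
  | succ n ih =>
    have hasSum_tail (a : G) : HasSum (fun γ : Fin n → G =>
        (∏ i, μ (γ i)) * f (Fin.cons a (Fin.tail x * γ))) (f (Fin.cons a (Fin.tail x))) := by
      refine ih (f := fun y => f (Fin.cons a y)) (fun y => hf _) (fun i y => ?_) (Fin.tail x)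
      simpa [Fin.cons_update] using h i.succ (Fin.cons a y)
    have cons_mul (s : G) (γ : Fin n → G) :
        x * Fin.cons s γ = Fin.cons (x 0 * s) (Fin.tail x * γ) := by
      ext i
      cases i using Fin.cases <;> simp [Fin.tail]
    have hasSum_total := ((hμ.pi (n + 1)).summable_smul (x := fun γ => f (x * γ))
      fun γ => hf _).hasSum
    have hasSum_head := (hasSum_cons_iff.mpr hasSum_total).prod_fiberwise
      (g := fun s => μ s * f (Fin.cons (x 0 * s) (Fin.tail x)))
      fun s => by
        simpa [Fin.prod_univ_succ, cons_mul, mul_assoc] using (hasSum_tail (x 0 * s)).mul_left (μ s)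
    have update_zero (s : G) : update x 0 (x 0 * s) = Fin.cons (x 0 * s) (Fin.tail x) := by
      rw [← Fin.update_cons_zero (x 0) (Fin.tail x), Fin.cons_self_tail]
    have harmonic := h 0 x
    simp only [update_zero] at harmonic
    exact harmonic.unique hasSum_head ▸ hasSum_total

lemma isPluriharmonic_of_forall_isHarmonicIn (hμ : IsSymmGenProb G μ)
    {f : (Fin (n + 1) → G) → ℝ} (hf : ∀ x, |f x| ≤ C) (h : ∀ i, IsHarmonicIn μ i f) :
    IsPluriharmonic μ f := fun x => by
  have hasSum_inv := (Equiv.inv (Fin (n + 1) → G)).hasSum_iff.mpr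
    (hμ.isProbWeight.hasSum_prod_mul_of_isHarmonicIn hf h x)
  rw [← hasSum_inv.tsum_eq]
  refine tsum_congr fun γ => ?_
  simp only [Function.comp_apply, Equiv.inv_apply, Pi.inv_apply, hμ.symm]
  rfl

open scoped BoundedContinuousFunction in
theorem eq_apply_one_of_forall_isHarmonicIn (hμ : IsSymmGenProb G μ) {b : (Fin 2 → G) → ℝ}
    (hb : b ∈ grpC G 1) (h : ∀ i, IsHarmonicIn μ i b) (x : Fin 2 → G) : b x = b 1 := by
  obtain ⟨⟨C, hC⟩, hinv⟩ := hb
  let _ : TopologicalSpace G := ⊥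
  have : DiscreteTopology G := ⟨rfl⟩
  have translate (s t u : G) : b ![s * t, s * u] = b ![t, u] := by
    rw [← hinv s ![t, u]]
    exact congrArg b (funext (Fin.forall_fin_two.mpr ⟨rfl, rfl⟩))
  let β : G →ᵇ ℝ :=
    BoundedContinuousFunction.ofNormedAddCommGroupDiscrete (fun t => b ![1, t]) C fun t => hC _
  have hright : rightAvg μ β = β := by
    ext t
    have update_one (s : G) : update ![1, t] 1 (t * s) = ![1, t * s] :=
      funext (Fin.forall_fin_two.mpr ⟨rfl, rfl⟩)
    rw [hμ.isProbWeight.rightAvg_apply]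
    simpa [β, update_one] using (h 1 ![1, t]).tsum_eq
  have hleft : leftAvg μ β = β := by
    ext t
    have translate_inv (s : G) : b ![1, s⁻¹ * t] = b (update ![1, t] 0 (1 * s)) := by
      rw [← translate s]
      exact congrArg b (funext (Fin.forall_fin_two.mpr ⟨by simp, by simp⟩))
    rw [hμ.isProbWeight.leftAvg_apply, ← (Equiv.inv G).tsum_eq]
    simpa [β, hμ.symm, translate_inv] using (h 0 ![1, t]).tsum_eq
  calc b x = b ![x 0 * 1, x 0 * ((x 0)⁻¹ * x 1)] :=
        congrArg b (funext (Fin.forall_fin_two.mpr ⟨by simp, by simp⟩))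
    _ = β ((x 0)⁻¹ * x 1) := translate _ _ _
    _ = β 1 := eq_apply_one_of_leftAvg_eq_of_rightAvg_eq hμ hleft hright _
    _ = b 1 := congrArg b (funext (Fin.forall_fin_two.mpr ⟨rfl, rfl⟩))

end Harmonic

section Smoothing

open Function (update)

variable {G : Type*} [Group G] {μ : G → ℝ} {m : (G → ℝ) →ₗ[ℝ] ℝ} {n : ℕ} {C : ℝ}

lemma IsStationary.piMean_tsum_mul_update (hst : IsStationary μ m) (hμ : IsProbWeight μ)
    (hm : IsMean m) {f : (Fin n → G) → ℝ} (hf : ∀ v, |f v| ≤ C) (i : Fin n) :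
    (piMean m n fun v => ∑' s, μ s * f (update v i (s * v i))) = piMean m n f := by
  induction n with
  | zero => exact i.elim0
  | succ n ih =>
    cases i using Fin.cases with
    | zero =>
      have interchange (a : G) : (piMean m n fun v => ∑' s, μ s * f (Fin.cons (s * a) v)) =
          ∑' s, μ s * piMean m n fun v => f (Fin.cons (s * a) v) :=
        ((hm.isMean_piMean n).hasSum_mul hμ fun s v => hf _).tsum_eq.symm
      simp only [piMean_succ, Fin.cons_zero, Fin.update_cons_zero, interchange]
      exact hst fun a => (hm.isMean_piMean n).abs_le fun v => hf _
    | succ i =>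
      simp only [piMean_succ, Fin.cons_succ, ← Fin.cons_update]
      exact congrArg m (funext fun a => ih (fun v => hf (Fin.cons a v)) i)

/-- Convolution of a function on `Gⁿ` with the product mean `m ⊗ ⋯ ⊗ m`. It turns bounded functions
into functions harmonic in each variable when `m` is stationary. -/
def smooth (m : (G → ℝ) →ₗ[ℝ] ℝ) (n : ℕ) : ((Fin n → G) → ℝ) →ₗ[ℝ] ((Fin n → G) → ℝ) :=
  LinearMap.pi fun x => piMean m n ∘ₗ LinearMap.funLeft ℝ ℝ (x * ·)

lemma smooth_apply (m : (G → ℝ) →ₗ[ℝ] ℝ) (f : (Fin n → G) → ℝ) (x : Fin n → G) :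
    smooth m n f x = piMean m n fun a => f (x * a) := rfl

lemma IsMean.abs_smooth_le (hm : IsMean m) {f : (Fin n → G) → ℝ} (hf : ∀ x, |f x| ≤ C)
    (x : Fin n → G) : |smooth m n f x| ≤ C :=
  (hm.isMean_piMean n).abs_le fun _ => hf _

lemma IsStationary.isHarmonicIn_smooth (hst : IsStationary μ m) (hμ : IsProbWeight μ)
    (hm : IsMean m) {f : (Fin n → G) → ℝ} (hf : ∀ x, |f x| ≤ C) (i : Fin n) :
    IsHarmonicIn μ i (smooth m n f) := fun x => by
  have update_mul (s : G) (v : Fin n → G) :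
      update x i (x i * s) * v = x * update v i (s * v i) := by
    ext j
    obtain rfl | hj := eq_or_ne j i
    · simp [mul_assoc]
    · simp [hj]
  simp only [smooth_apply, update_mul]
  rw [← hst.piMean_tsum_mul_update hμ hm (f := fun v => f (x * v)) (fun v => hf _) i]
  exact (hm.isMean_piMean n).hasSum_mul hμ fun s v => hf _

lemma IsMean.smooth_mem_grpC (hm : IsMean m) {f : (Fin (n + 1) → G) → ℝ} (hf : f ∈ grpC G n) :
    smooth m (n + 1) f ∈ grpC G n := by
  obtain ⟨⟨C, hC⟩, hinv⟩ := hf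
  refine ⟨⟨C, hm.abs_smooth_le hC⟩, fun γ x => congrArg (piMean m (n + 1)) (funext fun a => ?_)⟩
  have hassoc : (fun i => γ • x i) * a = fun i => γ • (x * a) i :=
    funext fun i => mul_assoc γ (x i) (a i)
  exact (congrArg f hassoc).trans (hinv γ (x * a))

lemma gcob_apply {X : Type*} (f : (Fin (n + 1) → X) → ℝ) (x : Fin (n + 2) → X) :
    gcob X n f x = ∑ i : Fin (n + 2), (-1 : ℝ) ^ (i : ℕ) * f (x ∘ i.succAbove) := rfl

lemma IsMean.gcob_smooth (hm : IsMean m) (f : (Fin (n + 1) → G) → ℝ) :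
    gcob G n (smooth m (n + 1) f) = smooth m (n + 2) (gcob G n f) := by
  ext x
  have expand : (fun a => gcob G n f (x * a)) = ∑ i : Fin (n + 2),
      (-1 : ℝ) ^ (i : ℕ) • fun a : Fin (n + 2) → G =>
        f ((x ∘ i.succAbove) * (a ∘ i.succAbove)) := by
    ext a
    simp only [gcob_apply, Finset.sum_apply, Pi.smul_apply, smul_eq_mul]
    rfl
  rw [smooth_apply, expand, map_sum, gcob_apply]
  refine Finset.sum_congr rfl fun i _ => ?_
  rw [map_smul, hm.piMean_comp_succAbove i fun a => f ((x ∘ i.succAbove) * a)]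
  rfl

lemma IsMean.smooth_mem_grpZ (hm : IsMean m) {f : (Fin (n + 1) → G) → ℝ} (hf : f ∈ grpZ G n) :
    smooth m (n + 1) f ∈ grpZ G n := by
  refine ⟨hm.smooth_mem_grpC hf.1, LinearMap.mem_ker.mpr ?_⟩
  rw [hm.gcob_smooth, LinearMap.mem_ker.mp hf.2, map_zero]

end Smoothing

section DegreeTwo

lemma funext_fin_three {X : Type*} {x y : Fin 3 → X} (h₀ : x 0 = y 0) (h₁ : x 1 = y 1)
    (h₂ : x 2 = y 2) : x = y :=
  funext (Fin.forall_fin_succ.mpr ⟨h₀, Fin.forall_fin_two.mpr ⟨h₁, h₂⟩⟩)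

lemma cocycle_apply_eq_zero {X : Type*} {f : (Fin 3 → X) → ℝ} (hf : f ∈ LinearMap.ker (gcob X 2))
    (w x y z : X) : f ![x, y, z] - f ![w, y, z] + f ![w, x, z] - f ![w, x, y] = 0 := by
  have h : gcob X 2 f ![w, x, y, z] = 0 := congrFun hf _
  have comp_succAbove : (fun i : Fin 4 => f (![w, x, y, z] ∘ i.succAbove)) =
      ![f ![x, y, z], f ![w, y, z], f ![w, x, z], f ![w, x, y]] := by
    ext i
    fin_cases i <;> exact congrArg f (funext_fin_three rfl rfl rfl)
  have sum_eq_zero : ∑ i : Fin 4, (-1 : ℝ) ^ (i : ℕ) *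
      ![f ![x, y, z], f ![w, y, z], f ![w, x, z], f ![w, x, y]] i = 0 := comp_succAbove ▸ h
  simpa [Fin.sum_univ_four, pow_succ, sub_eq_add_neg] using sum_eq_zero

variable {G : Type*} [Group G] {m : (G → ℝ) →ₗ[ℝ] ℝ} {f : (Fin 3 → G) → ℝ}

lemma apply_mul_left_of_mem_invF (hf : f ∈ invF G G 2) (s x y z : G) :
    f ![s * x, s * y, s * z] = f ![x, y, z] := by
  rw [← hf s ![x, y, z]]
  exact congrArg f (funext_fin_three rfl rfl rfl)

/-- The alternating sum of `f` over the two simplices of the prism between the edges `x` and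
`x * a`. -/
def prism (f : (Fin 3 → G) → ℝ) (x a : Fin 2 → G) : ℝ :=
  f ![x 0, x 0 * a 0, x 1 * a 1] - f ![x 0, x 1, x 1 * a 1]

lemma sum_prism_comp_succAbove (hf : f ∈ LinearMap.ker (gcob G 2)) (x a : Fin 3 → G) :
    ∑ i : Fin 3, (-1 : ℝ) ^ (i : ℕ) * prism f (x ∘ i.succAbove) (a ∘ i.succAbove) =
      f (x * a) - f x := by
  have hx : f x = f ![x 0, x 1, x 2] := congrArg f (funext_fin_three rfl rfl rfl)
  have hxa : f (x * a) = f ![x 0 * a 0, x 1 * a 1, x 2 * a 2] :=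
    congrArg f (funext_fin_three rfl rfl rfl)
  have h₁ := cocycle_apply_eq_zero hf (x 0) (x 0 * a 0) (x 1 * a 1) (x 2 * a 2)
  have h₂ := cocycle_apply_eq_zero hf (x 0) (x 1) (x 1 * a 1) (x 2 * a 2)
  have h₃ := cocycle_apply_eq_zero hf (x 0) (x 1) (x 2) (x 2 * a 2)
  rw [Fin.sum_univ_three, hx, hxa]
  change (-1) ^ 0 * (f ![x 1, x 1 * a 1, x 2 * a 2] - f ![x 1, x 2, x 2 * a 2]) +
    (-1) ^ 1 * (f ![x 0, x 0 * a 0, x 2 * a 2] - f ![x 0, x 2, x 2 * a 2]) +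
    (-1) ^ 2 * (f ![x 0, x 0 * a 0, x 1 * a 1] - f ![x 0, x 1, x 1 * a 1]) = _
  linarith

/-- The value in degree two of the chain homotopy from the identity to `smooth m`. -/
def smoothHomotopy (m : (G → ℝ) →ₗ[ℝ] ℝ) (f : (Fin 3 → G) → ℝ) (x : Fin 2 → G) : ℝ :=
  piMean m 2 (prism f x)

lemma IsMean.smoothHomotopy_mem_grpC (hm : IsMean m) (hf : f ∈ grpC G 2) :
    smoothHomotopy m f ∈ grpC G 1 := by
  obtain ⟨⟨C, hC⟩, hinv⟩ := hf
  refine ⟨⟨C + C, fun x => (hm.isMean_piMean 2).abs_le fun a => ?_⟩, fun γ x => ?_⟩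
  · exact (abs_sub _ _).trans (add_le_add (hC _) (hC _))
  · have : prism f (fun i => γ • x i) = prism f x := by
      ext a
      simp only [prism, smul_eq_mul, mul_assoc, apply_mul_left_of_mem_invF hinv]
    exact congrArg (piMean m 2) this

lemma IsMean.gcob_smoothHomotopy (hm : IsMean m) (hf : f ∈ LinearMap.ker (gcob G 2)) :
    gcob G 1 (smoothHomotopy m f) = smooth m 3 f - f := by
  ext x
  have hprism : (fun a => f (x * a)) - (fun _ => f x) = ∑ i : Fin 3,
      (-1 : ℝ) ^ (i : ℕ) • fun a : Fin 3 → G => prism f (x ∘ i.succAbove) (a ∘ i.succAbove) := by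
    ext a
    simpa using (sum_prism_comp_succAbove hf x a).symm
  calc gcob G 1 (smoothHomotopy m f) x
      = ∑ i : Fin 3, (-1 : ℝ) ^ (i : ℕ) *
          piMean m 3 fun a => prism f (x ∘ i.succAbove) (a ∘ i.succAbove) := by
        rw [gcob_apply]
        exact Finset.sum_congr rfl fun i _ => congrArg ((-1 : ℝ) ^ (i : ℕ) * ·)
          (hm.piMean_comp_succAbove i (prism f (x ∘ i.succAbove))).symm
    _ = piMean m 3 ((fun a => f (x * a)) - fun _ => f x) := by
        rw [hprism, map_sum]
        simp only [map_smul, smul_eq_mul]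
    _ = smooth m 3 f x - f x := by
        rw [map_sub, (hm.isMean_piMean 3).map_const, smooth_apply]

end DegreeTwo

section Alternating

open Function (update)

variable {X : Type*} {n : ℕ}

lemma mem_altF_of_forall_swap {f : (Fin (n + 1) → X) → ℝ}
    (hf : ∀ (i : Fin n) g, f (g ∘ Equiv.swap i.castSucc i.succ) = -f g) : f ∈ altF X n := by
  intro g π
  have hπ : π ∈ Submonoid.closure
      (Set.range fun i : Fin n => Equiv.swap i.castSucc i.succ) := by
    rw [Equiv.Perm.mclosure_swap_castSucc_succ]
    exact Submonoid.mem_top π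
  induction hπ using Submonoid.closure_induction generalizing g with
  | mem π hπ =>
    obtain ⟨i, rfl⟩ := hπ
    rw [hf, Equiv.Perm.sign_swap i.castSucc_lt_succ.ne]
    simp
  | one => simp
  | mul π ρ _ _ ihπ ihρ =>
    rw [Equiv.Perm.coe_mul, ← Function.comp_assoc, ihρ, ihπ, Equiv.Perm.sign_mul]
    push_cast
    ring

variable {G : Type*} [Group G] {μ : G → ℝ} {F : (Fin 3 → G) → ℝ}

lemma apply_self_self_self (hF : F ∈ invF G G 2) (x : G) : F ![x, x, x] = F 1 := by
  have translate := apply_mul_left_of_mem_invF hF x 1 1 1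
  rw [mul_one] at translate
  exact translate.trans (congrArg F (funext_fin_three rfl rfl rfl))

lemma cocycle_apply_self_left (hF : F ∈ grpZ G 2) (x z : G) : F ![x, x, z] = F 1 := by
  linarith [cocycle_apply_eq_zero hF.2 x x x z, apply_self_self_self hF.1.2 x]

lemma cocycle_apply_self_right (hF : F ∈ grpZ G 2) (x y : G) : F ![x, y, y] = F 1 := by
  linarith [cocycle_apply_eq_zero hF.2 x y y y, apply_self_self_self hF.1.2 y]

lemma cocycle_apply_add_apply_swap (hF : F ∈ grpZ G 2) (x y z : G) :
    F ![x, y, z] + F ![y, x, z] = F 1 + F ![x, y, x] := by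
  linarith [cocycle_apply_eq_zero hF.2 x y x z, cocycle_apply_self_left hF x z]

-- By `cocycle_apply_add_apply_swap`, `F (x, y, x)` is a sum of terms in which `x` occurs only once.
lemma isHarmonicIn_cocycle_apply_self_outer (hμ : IsProbWeight μ) (hF : F ∈ grpZ G 2)
    (hharm : ∀ i, IsHarmonicIn μ i F) (i : Fin 2) :
    IsHarmonicIn μ i fun v => F ![v 0, v 1, v 0] := by
  have update_zero (a b c d : G) : update ![a, b, c] 0 d = ![d, b, c] :=
    funext_fin_three rfl rfl rfl
  have update_one (a b c d : G) : update ![a, b, c] 1 d = ![a, d, c] :=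
    funext_fin_three rfl rfl rfl
  have hstraight : ∀ i, IsHarmonicIn μ i fun v : Fin 2 → G => F ![v 0, v 1, 1] :=
    Fin.forall_fin_two.mpr
      ⟨fun v => by simpa [update_zero] using hharm 0 ![v 0, v 1, 1],
        fun v => by simpa [update_one] using hharm 1 ![v 0, v 1, 1]⟩
  have hswapped : ∀ i, IsHarmonicIn μ i fun v : Fin 2 → G => F ![v 1, v 0, 1] :=
    Fin.forall_fin_two.mpr
      ⟨fun v => by simpa [update_one] using hharm 1 ![v 1, v 0, 1],
        fun v => by simpa [update_zero] using hharm 0 ![v 1, v 0, 1]⟩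
  convert ((hstraight i).add (hswapped i)).sub_const hμ (F 1) using 2 with v
  linarith [cocycle_apply_add_apply_swap hF (v 0) (v 1) 1]

lemma cocycle_apply_self_outer (hμ : IsSymmGenProb G μ) (hF : F ∈ grpZ G 2)
    (hharm : ∀ i, IsHarmonicIn μ i F) (x y : G) : F ![x, y, x] = F 1 := by
  have mem : (fun v : Fin 2 → G => F ![v 0, v 1, v 0]) ∈ grpC G 1 := by
    obtain ⟨⟨⟨C, hC⟩, hinv⟩, -⟩ := hF
    exact ⟨⟨C, fun v => hC _⟩, fun γ v => apply_mul_left_of_mem_invF hinv γ _ _ _⟩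
  have const := eq_apply_one_of_forall_isHarmonicIn hμ mem
    (isHarmonicIn_cocycle_apply_self_outer hμ.isProbWeight hF hharm) ![x, y]
  exact const.trans (apply_self_self_self hF.1.2 1)

/-- Subtraction of the value at the identity, which makes a 2-cocycle that is harmonic in each
variable alternating. -/
def center : ((Fin n → G) → ℝ) →ₗ[ℝ] ((Fin n → G) → ℝ) where
  toFun f x := f x - f 1
  map_add' _ _ := funext fun _ => add_sub_add_comm _ _ _ _
  map_smul' r _ := funext fun _ => (mul_sub r _ _).symm

lemma center_apply (f : (Fin n → G) → ℝ) (x : Fin n → G) : center f x = f x - f 1 := rfl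

lemma center_swap_zero_one (hμ : IsSymmGenProb G μ) (hF : F ∈ grpZ G 2)
    (hharm : ∀ i, IsHarmonicIn μ i F) (x y z : G) :
    center F ![y, x, z] = -center F ![x, y, z] := by
  rw [center_apply, center_apply]
  linarith [cocycle_apply_add_apply_swap hF x y z, cocycle_apply_self_outer hμ hF hharm x y]

lemma center_swap_one_two (hμ : IsSymmGenProb G μ) (hF : F ∈ grpZ G 2)
    (hharm : ∀ i, IsHarmonicIn μ i F) (x y z : G) :
    center F ![x, z, y] = -center F ![x, y, z] := by
  rw [center_apply, center_apply]
  linarith [cocycle_apply_eq_zero hF.2 x y z y, cocycle_apply_self_outer hμ hF hharm y z,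
    cocycle_apply_self_right hF x y]

lemma center_mem_altF (hμ : IsSymmGenProb G μ) (hF : F ∈ grpZ G 2)
    (hharm : ∀ i, IsHarmonicIn μ i F) : center F ∈ altF G 2 := by
  have eta (g : Fin 3 → G) : ![g 0, g 1, g 2] = g := funext_fin_three rfl rfl rfl
  refine mem_altF_of_forall_swap (Fin.forall_fin_two.mpr ⟨fun g => ?_, fun g => ?_⟩)
  · have swap : g ∘ Equiv.swap (Fin.castSucc 0) (Fin.succ 0) = ![g 1, g 0, g 2] :=
      funext_fin_three rfl rfl rfl
    rw [swap, center_swap_zero_one hμ hF hharm, eta]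
  · have swap : g ∘ Equiv.swap (Fin.castSucc 1) (Fin.succ 1) = ![g 0, g 2, g 1] :=
      funext_fin_three rfl rfl rfl
    rw [swap, center_swap_one_two hμ hF hharm, eta]

lemma abs_center_le (hμ : IsSymmGenProb G μ) (hF : F ∈ grpZ G 2)
    (hharm : ∀ i, IsHarmonicIn μ i F) {C : ℝ} (hC : ∀ x, |F x| ≤ C) (x : Fin 3 → G) :
    |center F x| ≤ C := by
  have hx : F x = F ![x 0, x 1, x 2] := congrArg F (funext_fin_three rfl rfl rfl)
  have antisymmetrize : center F x = (F ![x 0, x 1, x 2] - F ![x 1, x 0, x 2]) / 2 := by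
    have := center_swap_zero_one hμ hF hharm (x 0) (x 1) (x 2)
    rw [center_apply, center_apply] at this
    rw [center_apply, hx]
    linarith
  rw [antisymmetrize, abs_le]
  constructor <;>
    linarith [abs_le.mp (hC ![x 0, x 1, x 2]), abs_le.mp (hC ![x 1, x 0, x 2])]

lemma const_mem_grpC (n : ℕ) (c : ℝ) : (fun _ => c) ∈ grpC G n :=
  ⟨⟨|c|, fun _ => le_rfl⟩, fun _ _ => rfl⟩

lemma gcob_const_of_odd (hn : Odd n) (c : ℝ) : gcob X n (fun _ => c) = fun _ => c := by
  ext x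
  rw [gcob_apply, ← Finset.sum_mul, Fin.sum_neg_one_pow, if_neg (by grind), one_mul]

lemma gcob_const_of_even (hn : Even n) (c : ℝ) : gcob X n (fun _ => c) = 0 := by
  ext x
  rw [gcob_apply, ← Finset.sum_mul, Fin.sum_neg_one_pow, if_pos (by grind), zero_mul, Pi.zero_apply]

lemma center_mem_grpZ (hF : F ∈ grpZ G 2) : center F ∈ grpZ G 2 :=
  sub_mem hF ⟨const_mem_grpC 2 (F 1), gcob_const_of_even (n := 2) even_two (F 1)⟩

lemma center_sub_self_mem_grpB (F : (Fin 3 → G) → ℝ) : center F - F ∈ grpB G 2 := by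
  refine ⟨_, const_mem_grpC 1 (-F 1), ?_⟩
  rw [gcob_const_of_odd (n := 1) odd_one]
  ext x
  simp [center_apply]

end Alternating

section Section

lemma supN_le_supN {X : Type*} {f g : X → ℝ} (hf : ∃ C, ∀ x, |f x| ≤ C)
    (h : ∀ C, (∀ x, |f x| ≤ C) → ∀ x, |g x| ≤ C) : supN g ≤ supN f := by
  obtain ⟨C, hC⟩ := hf
  exact csInf_le_csInf ⟨0, fun _ hD => hD.1⟩
    ⟨|C|, abs_nonneg C, fun x => (hC x).trans (le_abs_self C)⟩ fun D hD => ⟨hD.1, h D hD.2⟩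

variable {G : Type*} [Group G] {n : ℕ}

lemma HbClass_eq_iff {f g : grpZ G n} : HbClass f = HbClass g ↔ f.1 - g.1 ∈ grpB G n :=
  Submodule.Quotient.eq _

lemma hbNorm_HbClass_eq_supN {z : grpZ G n}
    (hmin : ∀ f : grpZ G n, HbClass f = HbClass z → supN z.1 ≤ supN f.1) :
    hbNorm (HbClass z) = supN z.1 :=
  IsLeast.csInf_eq ⟨⟨z, rfl, rfl⟩, fun _ ⟨f, hf, hr⟩ => hr ▸ hmin f hf⟩

variable {μ : G → ℝ} {m : (G → ℝ) →ₗ[ℝ] ℝ} {f : (Fin 3 → G) → ℝ}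

/-- The pluriharmonic alternating representative of the class of a bounded 2-cocycle, for a
`μ`-stationary mean `m`. -/
def harmonicRep (m : (G → ℝ) →ₗ[ℝ] ℝ) : ((Fin 3 → G) → ℝ) →ₗ[ℝ] ((Fin 3 → G) → ℝ) :=
  center ∘ₗ smooth m 3

lemma harmonicRep_mem_grpZ (hm : IsMean m) (hf : f ∈ grpZ G 2) : harmonicRep m f ∈ grpZ G 2 :=
  center_mem_grpZ (hm.smooth_mem_grpZ hf)

lemma harmonicRep_sub_self_mem_grpB (hm : IsMean m) (hf : f ∈ grpZ G 2) :
    harmonicRep m f - f ∈ grpB G 2 := by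
  have smooth_sub_mem : smooth m 3 f - f ∈ grpB G 2 :=
    ⟨_, hm.smoothHomotopy_mem_grpC hf.1, hm.gcob_smoothHomotopy hf.2⟩
  simpa [harmonicRep] using add_mem (center_sub_self_mem_grpB (smooth m 3 f)) smooth_sub_mem

lemma HbClass_harmonicRep (hm : IsMean m) (f : grpZ G 2) :
    HbClass ⟨harmonicRep m f, harmonicRep_mem_grpZ hm f.2⟩ = HbClass f :=
  HbClass_eq_iff.mpr (harmonicRep_sub_self_mem_grpB hm f.2)

lemma harmonicRep_eq_zero_of_mem_grpB (hμ : IsSymmGenProb G μ) (hm : IsMean m)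
    (hst : IsStationary μ m) (hf : f ∈ grpB G 2) : harmonicRep m f = 0 := by
  obtain ⟨b, hb, rfl⟩ := hf
  obtain ⟨C, hC⟩ := hb.1
  have smooth_const : smooth m 2 b = fun _ => smooth m 2 b 1 := funext
    (eq_apply_one_of_forall_isHarmonicIn hμ (hm.smooth_mem_grpC hb)
      (hst.isHarmonicIn_smooth hμ.isProbWeight hm hC))
  ext x
  rw [harmonicRep, LinearMap.comp_apply, ← hm.gcob_smooth, smooth_const,
    gcob_const_of_odd (n := 1) odd_one]
  exact sub_self _

lemma isHarmonicIn_smooth_of_mem_grpZ (hμ : IsProbWeight μ) (hm : IsMean m)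
    (hst : IsStationary μ m) (hf : f ∈ grpZ G 2) (i : Fin 3) : IsHarmonicIn μ i (smooth m 3 f) := by
  obtain ⟨C, hC⟩ := hf.1.1
  exact hst.isHarmonicIn_smooth hμ hm hC i

lemma harmonicRep_mem_altF (hμ : IsSymmGenProb G μ) (hm : IsMean m) (hst : IsStationary μ m)
    (hf : f ∈ grpZ G 2) : harmonicRep m f ∈ altF G 2 :=
  center_mem_altF hμ (hm.smooth_mem_grpZ hf)
    (isHarmonicIn_smooth_of_mem_grpZ hμ.isProbWeight hm hst hf)

lemma supN_harmonicRep_le (hμ : IsSymmGenProb G μ) (hm : IsMean m) (hst : IsStationary μ m)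
    (hf : f ∈ grpZ G 2) : supN (harmonicRep m f) ≤ supN f :=
  supN_le_supN hf.1.1 fun _ hC => abs_center_le hμ (hm.smooth_mem_grpZ hf)
    (isHarmonicIn_smooth_of_mem_grpZ hμ.isProbWeight hm hst hf) (hm.abs_smooth_le hC)

lemma isPluriharmonic_harmonicRep (hμ : IsSymmGenProb G μ) (hm : IsMean m)
    (hst : IsStationary μ m) (hf : f ∈ grpZ G 2) : IsPluriharmonic μ (harmonicRep m f) := by
  obtain ⟨C, hC⟩ := (harmonicRep_mem_grpZ hm hf).1.1
  exact isPluriharmonic_of_forall_isHarmonicIn hμ hC fun i =>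
    (isHarmonicIn_smooth_of_mem_grpZ hμ.isProbWeight hm hst hf i).sub_const hμ.isProbWeight _

lemma supN_harmonicRep (hμ : IsSymmGenProb G μ) (hm : IsMean m) (hst : IsStationary μ m)
    (f : grpZ G 2) : supN (harmonicRep m f) = hbNorm (HbClass f) := by
  rw [← HbClass_harmonicRep hm f]
  let z : grpZ G 2 := ⟨harmonicRep m f, harmonicRep_mem_grpZ hm f.2⟩
  refine (hbNorm_HbClass_eq_supN (z := z) fun g hg => ?_).symm
  have rep_eq : harmonicRep m g.1 = harmonicRep m f := by
    rw [← sub_eq_zero, ← map_sub]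
    exact harmonicRep_eq_zero_of_mem_grpB hμ hm hst
      (HbClass_eq_iff.mp (hg.trans (HbClass_harmonicRep hm f)))
  exact (congrArg supN rep_eq).symm.trans_le (supN_harmonicRep_le hμ hm hst g.2)

end Section

/-- **Isometric sections of `H_b²` by pluriharmonic cocycles (Burger–Monod).**
Let `Γ` be a countable group and `μ` a symmetric probability measure on `Γ` whose support
generates `Γ`. Then there is an isometric linear section
`σ : H_b²(Γ) → Zℓ^∞(Γ³)^Γ` of the canonical projection from `Γ`-invariant bounded
2-cocycles onto `H_b²(Γ)`; moreover `σ` takes values in the `Γ`-invariant alternating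
`μ`-pluriharmonic cocycles. -/
theorem pluriharmonic_isometric_section
    (Γ : Type) [Group Γ] [Countable Γ] (μ : Γ → ℝ) (hμ : IsSymmGenProb Γ μ) :
    ∃ σ : Hb Γ 2 →ₗ[ℝ] ((Fin 3 → Γ) → ℝ),
      ∃ hmem : ∀ φ : Hb Γ 2, σ φ ∈ grpZ Γ 2,
        (∀ φ : Hb Γ 2, HbClass ⟨σ φ, hmem φ⟩ = φ) ∧
        (∀ φ : Hb Γ 2, supN (σ φ) = hbNorm φ) ∧
        (∀ φ : Hb Γ 2, σ φ ∈ altF Γ 2) ∧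
        (∀ φ : Hb Γ 2, IsPluriharmonic μ (σ φ)) := by
  obtain ⟨m, hm, hst⟩ := exists_isMean_isStationary hμ.isProbWeight
  have forall_class {P : Hb Γ 2 → Prop} (h : ∀ f : grpZ Γ 2, P (HbClass f)) (φ : Hb Γ 2) : P φ :=
    Submodule.Quotient.induction_on _ φ h
  let σ : Hb Γ 2 →ₗ[ℝ] ((Fin 3 → Γ) → ℝ) :=
    Submodule.liftQ _ (harmonicRep m ∘ₗ (grpZ Γ 2).subtype)
      fun _ hf => harmonicRep_eq_zero_of_mem_grpB hμ hm hst hf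
  refine ⟨σ, forall_class fun f => harmonicRep_mem_grpZ hm f.2, forall_class fun f => ?_,
    forall_class fun f => ?_, forall_class fun f => ?_, forall_class fun f => ?_⟩
  · exact HbClass_harmonicRep hm f
  · exact supN_harmonicRep hμ hm hst f
  · exact harmonicRep_mem_altF hμ hm hst f.2
  · exact isPluriharmonic_harmonicRep hμ hm hst f.2

end GrpBC
end
end

section
/- Let 𝒢 be a graph of groups based on a finite graph G with countable vertex groups Γ_v and amenable edge groups Γ_e, and let Γ = π₁(𝒢). Let S_𝒢 = (Γ × V(G)) ⊔ ⨆_{e ∈ Ē(G)} Γ/Γ_e with the natural Γ-action, and for each vertex v let S_v = Γ_v ⊔ ⨆_{t(e)=v} Γ_v/Γ_e with the Γ_v-action by left multiplication, and let φ_v^• : ℓ^∞_alt(S_𝒢^{•+1}) → ℓ^∞_alt(S_v^{•+1}) be the pullback along the natural inclusion φ_v : S_v → S_𝒢. Then for every n ≥ 2 there exists a norm non-increasing chain map ψ^n : ⊕_{v∈V(G)} ℓ^∞_alt(S_v^{n+1})^{Γ_v} → ℓ^∞_alt(S_𝒢^{n+1})^Γ, defined in all degrees n ≥ 2 and commuting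 with the coboundaries there, such that the composition φ^n ∘ ψ^n, where φ^n = ⊕_{v∈V(G)} φ_v^n, is the identity of ⊕_{v∈V(G)} ℓ^∞_alt(S_v^{n+1})^{Γ_v}. -/
noncomputable section

namespace GrpBC

variable (Γ : Type*) [Group Γ]

variable {Γ}

/-! ### Restriction maps -/

variable {Γ₁ : Type*} [Group Γ₁]

/-! ### The complex of alternating bounded functions on a `Γ`-set -/

variable (Γ : Type*) [Group Γ] (S : Type*) [MulAction Γ S]

variable {Γ S}

/-! ### Graphs of groups and their fundamental groups (Serre) -/

/-- A graph in the sense of Serre: oriented edges with a fixed-point free involution. -/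
structure SerreGraph where
  V : Type
  E : Type
  bar : E → E
  t : E → V
  bar_bar : ∀ e, bar (bar e) = e
  bar_ne : ∀ e, bar e ≠ e

namespace SerreGraph

/-- The origin of an edge. -/
def o (G : SerreGraph) (e : G.E) : G.V := G.t (G.bar e)

/-- `IsWalk p v w` : `p` is a walk of (oriented) edges from `v` to `w`. -/
def IsWalk (G : SerreGraph) : List G.E → G.V → G.V → Prop
  | [], v, w => v = w
  | e :: p, v, w => G.o e = v ∧ G.IsWalk p (G.t e) w

/-- A walk is reduced if it has no backtracking. -/
def Reduced (G : SerreGraph) (p : List G.E) : Prop :=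
  p.Chain' (fun e f => f ≠ G.bar e)

/-- A spanning tree of a graph: a symmetric set of edges connecting all the vertices and
containing no nontrivial reduced loop. -/
def IsSpanningTree (G : SerreGraph) (T : Set G.E) : Prop :=
  (∀ e ∈ T, G.bar e ∈ T) ∧
  (∀ v w : G.V, ∃ p : List G.E, (∀ e ∈ p, e ∈ T) ∧ G.IsWalk p v w) ∧
  (∀ (v : G.V) (p : List G.E), p ≠ [] → (∀ e ∈ p, e ∈ T) → G.IsWalk p v v → ¬ G.Reduced p)

end SerreGraph

/-- A graph of groups on a graph `G`: vertex groups, edge groups (with the identification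
`Γ_e = Γ_{ē}` given by the isomorphisms `barEquiv`) and injective structure morphisms
`h_e : Γ_e → Γ_{t(e)}`. -/
structure GraphOfGroups (G : SerreGraph) where
  Gv : G.V → Type
  grpV : ∀ v, Group (Gv v)
  Ge : G.E → Type
  grpE : ∀ e, Group (Ge e)
  barEquiv : ∀ e, Ge e ≃* Ge (G.bar e)
  barEquiv_coh : ∀ (e : G.E) (a : Ge e), HEq (barEquiv (G.bar e) (barEquiv e a)) a
  h : ∀ e, Ge e →* Gv (G.t e)
  h_inj : ∀ e, Function.Injective (h e)

attribute [instance] GraphOfGroups.grpV GraphOfGroups.grpE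

namespace GraphOfGroups

variable {G : SerreGraph} (𝒢 : GraphOfGroups G)

/-- The generators of the fundamental group of a graph of groups: the elements of the
vertex groups together with the edges of the graph. -/
abbrev gens : Type := ((v : G.V) × 𝒢.Gv v) ⊕ G.E

/-- The relations defining the fundamental group of a graph of groups with respect to a
spanning tree `T`: multiplication in each vertex group; `ē = e⁻¹`;
`e (h_{ē}(ā)) e⁻¹ = h_e(a)` for every edge `e` and `a ∈ Γ_e`; and `e = 1` for `e ∈ T`. -/
def rels (T : Set G.E) : Set (FreeGroup 𝒢.gens) :=
  {w | (∃ (v : G.V) (g h' : 𝒢.Gv v),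
          w = FreeGroup.of (Sum.inl ⟨v, g⟩) * FreeGroup.of (Sum.inl ⟨v, h'⟩) *
            (FreeGroup.of (Sum.inl ⟨v, g * h'⟩))⁻¹) ∨
       (∃ e : G.E, w = FreeGroup.of (Sum.inr e) * FreeGroup.of (Sum.inr (G.bar e))) ∨
       (∃ (e : G.E) (a : 𝒢.Ge e),
          w = FreeGroup.of (Sum.inr e) *
            FreeGroup.of (Sum.inl ⟨G.t (G.bar e), 𝒢.h (G.bar e) (𝒢.barEquiv e a)⟩) *
            (FreeGroup.of (Sum.inr e))⁻¹ * (FreeGroup.of (Sum.inl ⟨G.t e, 𝒢.h e a⟩))⁻¹) ∨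
       (∃ e ∈ T, w = FreeGroup.of (Sum.inr e))}

/-- The fundamental group of a graph of groups with respect to a spanning tree `T`
(Serre). -/
def pi1 (T : Set G.E) : Type := PresentedGroup (𝒢.rels T)

instance (T : Set G.E) : Group (𝒢.pi1 T) := by unfold pi1; infer_instance

lemma mk_rel_one {T : Set G.E} {r : FreeGroup 𝒢.gens} (hr : r ∈ 𝒢.rels T) :
    PresentedGroup.mk (𝒢.rels T) r = 1 :=
  (QuotientGroup.eq_one_iff r).2 (Subgroup.subset_normalClosure hr)

/-- The canonical inclusion of a vertex group into the fundamental group of a graph of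
groups. -/
def vtxIncl (T : Set G.E) (v : G.V) : 𝒢.Gv v →* 𝒢.pi1 T :=
  MonoidHom.mk' (fun g => (PresentedGroup.of (rels := 𝒢.rels T) (Sum.inl ⟨v, g⟩))) (by
    intro g h'
    have hr : (FreeGroup.of (Sum.inl ⟨v, g⟩) * FreeGroup.of (Sum.inl ⟨v, h'⟩) *
        (FreeGroup.of (Sum.inl (⟨v, g * h'⟩ : (v : G.V) × 𝒢.Gv v)))⁻¹) ∈ 𝒢.rels T :=
      Or.inl ⟨v, g, h', rfl⟩
    have h1 := 𝒢.mk_rel_one hr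
    rw [map_mul, map_mul, map_inv] at h1
    exact (mul_inv_eq_one.mp h1).symm)

/-- The image in the fundamental group of an edge of the graph. -/
def edgeElt (T : Set G.E) (e : G.E) : 𝒢.pi1 T :=
  PresentedGroup.of (rels := 𝒢.rels T) (Sum.inr e)

end GraphOfGroups

/-! ### The Bass–Serre amenable spaces attached to a graph of groups -/

namespace GraphOfGroups

variable {G : SerreGraph} (𝒢 : GraphOfGroups G) (T : Set G.E)

/-- Transport between vertex groups along an equality of vertices. -/
def castV {v w : G.V} (h : v = w) : 𝒢.Gv v ≃* 𝒢.Gv w := by subst h; exact MulEquiv.refl _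

/-- The inclusion of an edge group into the fundamental group, through the terminal
vertex group. -/
def edgeHom (e : G.E) : 𝒢.Ge e →* 𝒢.pi1 T := (𝒢.vtxIncl T (G.t e)).comp (𝒢.h e)

/-- The edge subgroup `Γ_e ≤ Γ`. -/
def edgeSubgroupΓ (e : G.E) : Subgroup (𝒢.pi1 T) := (𝒢.edgeHom T e).range

/-- An orientation of a graph: a choice of one edge in each geometric edge. -/
def _root_.GrpBC.SerreGraph.IsOrientation (G : SerreGraph) (O : Set G.E) : Prop :=
  ∀ e, e ∈ O ↔ G.bar e ∉ O

/-- The amenable `Γ`-space `S_𝒢 = (Γ × V(G)) ⊔ ⨆_{e ∈ Ē(G)} Γ/Γ_e`, where the geometric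
edges are realized through an orientation `O`. -/
abbrev SG (O : Set G.E) : Type :=
  (𝒢.pi1 T × G.V) ⊕ ((e : {e : G.E // e ∈ O}) × (𝒢.pi1 T ⧸ 𝒢.edgeSubgroupΓ T e.1))

instance (O : Set G.E) : SMul (𝒢.pi1 T) (𝒢.SG T O) :=
  ⟨fun g s => match s with
    | Sum.inl (x, v) => Sum.inl (g * x, v)
    | Sum.inr ⟨e, x⟩ => Sum.inr ⟨e, g • x⟩⟩

instance (O : Set G.E) : MulAction (𝒢.pi1 T) (𝒢.SG T O) where
  one_smul := by
    rintro (⟨x, v⟩ | ⟨e, x⟩)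
    · show (Sum.inl ((1 : 𝒢.pi1 T) * x, v) : 𝒢.SG T O) = Sum.inl (x, v)
      rw [one_mul]
    · show (Sum.inr ⟨e, (1 : 𝒢.pi1 T) • x⟩ : 𝒢.SG T O) = Sum.inr ⟨e, x⟩
      rw [one_smul]
  mul_smul := by
    intro g h s
    rcases s with ⟨x, v⟩ | ⟨e, x⟩
    · show (Sum.inl (g * h * x, v) : 𝒢.SG T O) = Sum.inl (g * (h * x), v)
      rw [mul_assoc]
    · show (Sum.inr ⟨e, (g * h) • x⟩ : 𝒢.SG T O) = Sum.inr ⟨e, g • h • x⟩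
      rw [mul_smul]

/-- The subgroup `Γ_e ≤ Γ_v` for an edge `e` with terminal vertex `v`. -/
def SvSubgroup (v : G.V) (e : {e : G.E // G.t e = v}) : Subgroup (𝒢.Gv v) :=
  ((𝒢.h e.1).range).comap (𝒢.castV e.2.symm).toMonoidHom

/-- The amenable `Γ_v`-space `S_v = Γ_v ⊔ ⨆_{t(e) = v} Γ_v/Γ_e`. -/
abbrev Sv (v : G.V) : Type :=
  𝒢.Gv v ⊕ ((e : {e : G.E // G.t e = v}) × (𝒢.Gv v ⧸ 𝒢.SvSubgroup v e))

instance (v : G.V) : SMul (𝒢.Gv v) (𝒢.Sv v) :=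
  ⟨fun g s => match s with
    | Sum.inl x => Sum.inl (g * x)
    | Sum.inr ⟨e, x⟩ => Sum.inr ⟨e, g • x⟩⟩

instance (v : G.V) : MulAction (𝒢.Gv v) (𝒢.Sv v) where
  one_smul := by
    rintro (x | ⟨e, x⟩)
    · show (Sum.inl ((1 : 𝒢.Gv v) * x) : 𝒢.Sv v) = Sum.inl x
      rw [one_mul]
    · show (Sum.inr ⟨e, (1 : 𝒢.Gv v) • x⟩ : 𝒢.Sv v) = Sum.inr ⟨e, x⟩
      rw [one_smul]
  mul_smul := by
    intro g h s
    rcases s with x | ⟨e, x⟩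
    · show (Sum.inl (g * h * x) : 𝒢.Sv v) = Sum.inl (g * (h * x))
      rw [mul_assoc]
    · show (Sum.inr ⟨e, (g * h) • x⟩ : 𝒢.Sv v) = Sum.inr ⟨e, g • h • x⟩
      rw [mul_smul]

attribute [local instance] Classical.propDecidable

/-- The inclusion `φ_v : S_v → S_𝒢`, sending `g ∈ Γ_v` to `(i_v(g), v)` and the coset
`gΓ_e` to the coset `i_v(g)Γ_e` (suitably translated by the edge generator when `e`
does not belong to the chosen orientation). -/
def phiV (O : Set G.E) (hO : G.IsOrientation O) (v : G.V) (s : 𝒢.Sv v) : 𝒢.SG T O :=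
  match s with
  | Sum.inl g => Sum.inl (𝒢.vtxIncl T v g, v)
  | Sum.inr ⟨e, x⟩ =>
      if he : e.1 ∈ O then
        Sum.inr ⟨⟨e.1, he⟩,
          QuotientGroup.mk (𝒢.vtxIncl T v (Quotient.out x))⟩
      else
        Sum.inr ⟨⟨G.bar e.1, by
            have h1 := hO (G.bar e.1)
            rw [G.bar_bar e.1] at h1
            exact h1.mpr he⟩,
          QuotientGroup.mk (𝒢.vtxIncl T v (Quotient.out x) * 𝒢.edgeElt T e.1)⟩

end GraphOfGroups

/-- Pullback of cochains along a map of sets. -/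
def pbSet {S₁ S : Type*} (φ : S₁ → S) (n : ℕ) :
    ((Fin (n + 1) → S) → ℝ) →ₗ[ℝ] ((Fin (n + 1) → S₁) → ℝ) where
  toFun f := fun x => f (fun j => φ (x j))
  map_add' f g := rfl
  map_smul' r f := rfl

/-!
The group `Γ` acts on the Bass–Serre tree, and from a tree vertex `w = g Γ_v` every point of `S_𝒢`
is seen in a direction, an element of `S_v` well defined up to `Γ_v`. Of two distinct tree
vertices, any point is seen from one of them in the direction of the other, so a tuple of at least
three points is seen in pairwise different directions from at most one vertex, its barycenter. The
map `ψ` evaluates `f_v` on the directions at the barycenter. As `f_v` is alternating, `ψ f` is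
equally the sum over all tree vertices of `f_v` applied to the directions there, and so commutes
with the coboundary. A tuple coming from `S_v` has the trivial coset `Γ_v` as barycenter, which
gives `φ ∘ ψ = id`.

Directions are obtained without normal forms. Free actions of the vertex groups on one large set,
equipped with equivariant maps to the `S_v`, are glued to an action of `Γ` by letting every edge
act by ping-pong: it throws the complement of the direction of `ē` into the direction of `e`.
Transported along a path of the Bass–Serre tree this separates its ends, and the orbits of
suitable base points carry the resulting directions over to `S_𝒢`.
-/

/-! ### Alternating cochains -/

section Alternating

open Function

variable {X : Type*} {n : ℕ} {f : (Fin (n + 1) → X) → ℝ}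

lemma apply_eq_zero_of_mem_altF (hf : f ∈ altF X n) {x : Fin (n + 1) → X} (hx : ¬ Injective x) :
    f x = 0 := by
  obtain ⟨i, j, hij, hne⟩ := not_injective_iff.1 hx
  have hswap : x ∘ Equiv.swap i j = x := by
    rw [Equiv.comp_swap_eq_update, hij, update_eq_self, ← hij, update_eq_self]
  have hsign := hf x (Equiv.swap i j)
  rw [hswap, Equiv.Perm.sign_swap hne] at hsign
  push_cast at hsign
  linarith

lemma insertNth_eq_neg_one_pow_mul_cons (hf : f ∈ altF X n) (p : Fin (n + 1)) (a : X)
    (v : Fin n → X) : f (p.insertNth a v) = (-1) ^ (p : ℕ) * f (Fin.cons a v) := by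
  have h := hf (Fin.cons a v) p.cycleRange
  rwa [Fin.cons_comp_cycleRange, Fin.sign_cycleRange, Units.val_pow_eq_pow_val, Units.val_neg,
    Units.val_one, Int.cast_pow, Int.cast_neg, Int.cast_one] at h

lemma face_add_face_eq_zero (hf : f ∈ altF X n) {y : Fin (n + 2) → X} {i j : Fin (n + 2)}
    (hij : i ≠ j) (hy : y i = y j) :
    (-1) ^ (i : ℕ) * f (i.removeNth y) + (-1) ^ (j : ℕ) * f (j.removeNth y) = 0 := by
  obtain ⟨k, rfl⟩ := Fin.exists_succAbove_eq hij
  -- Both faces are obtained by inserting the common value into the tuple omitting both indices.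
  set z := k.removeNth (j.removeNth y) with hz
  have hface_j : f (j.removeNth y) = (-1) ^ (k : ℕ) * f (Fin.cons (y j) z) := by
    rw [← insertNth_eq_neg_one_pow_mul_cons hf, ← hy]
    exact congrArg f (Fin.insertNth_self_removeNth k (j.removeNth y)).symm
  have hface_i : f ((j.succAbove k).removeNth y) =
      (-1) ^ (k.predAbove j : ℕ) * f (Fin.cons (y j) z) := by
    have hyj : y j = (j.succAbove k).removeNth y (k.predAbove j) :=
      congrArg y (Fin.succAbove_succAbove_predAbove j k).symm
    rw [← insertNth_eq_neg_one_pow_mul_cons hf, hz, Fin.removeNth_removeNth_eq_swap, hyj,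
      Fin.insertNth_self_removeNth]
  have hsign : (-1 : ℝ) ^ (j.succAbove k : ℕ) * (-1) ^ (k.predAbove j : ℕ) =
      -((-1) ^ (j : ℕ) * (-1) ^ (k : ℕ)) := by
    rw [← pow_add, ← pow_add, Fin.neg_one_pow_succAbove_add_predAbove]
  rw [hface_i, hface_j, ← mul_assoc, ← mul_assoc, hsign, neg_mul, neg_add_cancel]

lemma gcob_apply_eq_zero_of_mem_altF (hf : f ∈ altF X n) {y : Fin (n + 2) → X}
    (hy : ¬ Injective y) : gcob X n f y = 0 := by
  obtain ⟨i, j, hij, hne⟩ := not_injective_iff.1 hy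
  have hother : ∀ k, k ≠ i ∧ k ≠ j → (-1 : ℝ) ^ (k : ℕ) * f (y ∘ k.succAbove) = 0 := by
    rintro k ⟨hki, hkj⟩
    obtain ⟨i', rfl⟩ := Fin.exists_succAbove_eq hki.symm
    obtain ⟨j', rfl⟩ := Fin.exists_succAbove_eq hkj.symm
    rw [apply_eq_zero_of_mem_altF hf (not_injective_iff.2 ⟨i', j', hij, ?_⟩), mul_zero]
    exact fun h => hne (congrArg _ h)
  calc gcob X n f y = (-1) ^ (i : ℕ) * f (i.removeNth y) + (-1) ^ (j : ℕ) * f (j.removeNth y) :=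
        Fintype.sum_eq_add i j hne hother
    _ = 0 := face_add_face_eq_zero hf hne hij

end Alternating

section SupNorm

variable {X : Type*} {f : X → ℝ} {C : ℝ}

lemma supN_nonneg (f : X → ℝ) : 0 ≤ supN f := Real.sInf_nonneg fun _ hC => hC.1

lemma supN_le (hC : 0 ≤ C) (hf : ∀ x, |f x| ≤ C) : supN f ≤ C :=
  csInf_le ⟨0, fun _ h => h.1⟩ ⟨hC, hf⟩

lemma abs_le_supN (hf : ∀ x, |f x| ≤ C) (x : X) : |f x| ≤ supN f :=
  le_csInf ⟨C, (abs_nonneg _).trans (hf x), hf⟩ fun _ hD => hD.2 x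

end SupNorm

/-! ### Barycenters -/

section Transfer

open Function

variable {W Y : Type*} {A : W → Type*} (Q : ∀ w, Y → A w) {n : ℕ}

/-- Reading `Q w y` as the direction in which the point `y` is seen from `w`, a barycenter of a
tuple is a `w` from which its points are seen in pairwise different directions. -/
def IsBarycenter (x : Fin (n + 1) → Y) (w : W) : Prop := Injective fun i => Q w (x i)

/-- For `w ≠ w'`, every point is seen from `w` in one fixed direction `s` (that of `w'`) or from
`w'` in one fixed direction `s'` (that of `w`), as for two vertices of a tree. -/
def IsSeparating : Prop := ∀ ⦃w w' : W⦄, w ≠ w' → ∃ s s', ∀ y, Q w y = s ∨ Q w' y = s'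

open Classical in
/-- The cochain on `Y` that evaluates `f w` on the directions of a tuple at its barycenter `w`, and
vanishes on tuples without a barycenter. The choice of `w` is immaterial when `Q` is separating and
`2 ≤ n`, but the map is linear in any case. -/
def transfer (n : ℕ) :
    (∀ w, (Fin (n + 1) → A w) → ℝ) →ₗ[ℝ] ((Fin (n + 1) → Y) → ℝ) where
  toFun f x := if h : ∃ w, IsBarycenter Q x w then f h.choose fun i => Q h.choose (x i) else 0
  map_add' f g := by
    funext x
    by_cases h : ∃ w, IsBarycenter Q x w <;> simp [h]
  map_smul' r f := by
    funext x
    by_cases h : ∃ w, IsBarycenter Q x w <;> simp [h]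

lemma abs_transfer_le {f : ∀ w, (Fin (n + 1) → A w) → ℝ} {C : ℝ} (hC : 0 ≤ C)
    (hf : ∀ w z, |f w z| ≤ C) (x : Fin (n + 1) → Y) : |transfer Q n f x| ≤ C := by
  by_cases h : ∃ w, IsBarycenter Q x w
  · simpa [transfer, h] using hf _ _
  · simpa [transfer, h] using hC

variable {Q}

namespace IsSeparating

variable (hQ : IsSeparating Q) (hn : 2 ≤ n)
include hQ hn

/-- At most one of the points lies in the direction `s` and at most one in the direction `s'`. -/
lemma isBarycenter_unique {x : Fin (n + 1) → Y} {w w' : W} (hw : IsBarycenter Q x w)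
    (hw' : IsBarycenter Q x w') : w = w' := by
  classical
  by_contra hne
  obtain ⟨s, s', hs⟩ := hQ hne
  have hinj : Injective fun i => decide (Q w (x i) = s) := by
    intro i j hij
    by_cases hi : Q w (x i) = s <;> by_cases hj : Q w (x j) = s
    · exact hw (hi.trans hj.symm)
    · simp [hi, hj] at hij
    · simp [hi, hj] at hij
    · exact hw' (((hs _).resolve_left hi).trans ((hs _).resolve_left hj).symm)
  have hcard := Fintype.card_le_of_injective _ hinj
  rw [Fintype.card_fin, Fintype.card_bool] at hcard
  lia

lemma transfer_apply_of_isBarycenter (f : ∀ w, (Fin (n + 1) → A w) → ℝ) {x : Fin (n + 1) → Y}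
    {w : W} (hw : IsBarycenter Q x w) : transfer Q n f x = f w fun i => Q w (x i) := by
  have h : ∃ w, IsBarycenter Q x w := ⟨w, hw⟩
  obtain rfl := hQ.isBarycenter_unique hn hw h.choose_spec
  exact dif_pos h

section Vanishing

variable {f : ∀ w, (Fin (n + 1) → A w) → ℝ} (hf : ∀ w z, ¬ Injective z → f w z = 0)
  (x : Fin (n + 1) → Y)
include hf

lemma hasFiniteSupport : (fun w => f w fun i => Q w (x i)).HasFiniteSupport := by
  refine Set.Subsingleton.finite fun w hw w' hw' => hQ.isBarycenter_unique hn (x := x) ?_ ?_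
  · exact not_imp_comm.1 (hf w _) hw
  · exact not_imp_comm.1 (hf w' _) hw'

lemma transfer_apply_eq_finsum : transfer Q n f x = ∑ᶠ w, f w fun i => Q w (x i) := by
  by_cases h : ∃ w, IsBarycenter Q x w
  · obtain ⟨w, hw⟩ := h
    rw [hQ.transfer_apply_of_isBarycenter hn f hw, finsum_eq_single _ w fun w' hne => ?_]
    exact hf _ _ fun hw' => hne (hQ.isBarycenter_unique hn hw' hw)
  · rw [finsum_eq_zero_of_forall_eq_zero fun w => hf _ _ fun hw => h ⟨w, hw⟩]
    exact dif_neg h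

end Vanishing

variable {f : ∀ w, (Fin (n + 1) → A w) → ℝ} (hf : ∀ w, f w ∈ altF (A w) n)
include hf

lemma transfer_mem_altF : transfer Q n f ∈ altF Y n := by
  intro x π
  have hvanish w z := apply_eq_zero_of_mem_altF (hf w) (x := z)
  rw [hQ.transfer_apply_eq_finsum hn hvanish, hQ.transfer_apply_eq_finsum hn hvanish, mul_finsum]
  exact finsum_congr fun w => hf w (fun i => Q w (x i)) π

lemma transfer_mem_invF {P : Type*} [Group P] [MulAction P W] [MulAction P Y]
    (hinv : ∀ (p : P) w (x : Fin (n + 1) → Y),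
      f (p • w) (fun i => Q (p • w) (p • x i)) = f w fun i => Q w (x i)) :
    transfer Q n f ∈ invF P Y n := by
  intro p x
  have hvanish w z := apply_eq_zero_of_mem_altF (hf w) (x := z)
  rw [hQ.transfer_apply_eq_finsum hn hvanish, hQ.transfer_apply_eq_finsum hn hvanish,
    ← finsum_comp_equiv (MulAction.toPerm p)]
  exact finsum_congr fun w => hinv p w x

lemma transfer_gcob :
    transfer Q (n + 1) (fun w => gcob (A w) n (f w)) = gcob Y n (transfer Q n f) := by
  funext x
  have hvanish w z := apply_eq_zero_of_mem_altF (hf w) (x := z)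
  have hvanish_gcob w z := gcob_apply_eq_zero_of_mem_altF (hf w) (y := z)
  calc transfer Q (n + 1) (fun w => gcob (A w) n (f w)) x
      = ∑ᶠ w, ∑ k : Fin (n + 2), (-1) ^ (k : ℕ) * f w (fun i => Q w (x (k.succAbove i))) :=
        hQ.transfer_apply_eq_finsum (Nat.le_succ_of_le hn) hvanish_gcob x
    _ = ∑ k : Fin (n + 2), ∑ᶠ w, (-1) ^ (k : ℕ) * f w (fun i => Q w (x (k.succAbove i))) :=
        finsum_sum_comm _ _ fun k _ =>
          (hQ.hasFiniteSupport hn hvanish (x ∘ k.succAbove)).subset <|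
            support_mul_subset_right _ _
    _ = gcob Y n (transfer Q n f) x :=
        Finset.sum_congr rfl fun k _ => by
          rw [hQ.transfer_apply_eq_finsum hn hvanish, mul_finsum]
          rfl

end IsSeparating

end Transfer

/-! ### Potentials on spanning trees -/

namespace SerreGraph

variable {G : SerreGraph} {T O : Set G.E} {p q : List G.E} {u v w : G.V}

lemma isWalk_append : G.IsWalk (p ++ q) u w ↔ ∃ v, G.IsWalk p u v ∧ G.IsWalk q v w := by
  induction p generalizing u with
  | nil => simp [IsWalk]
  | cons e p ih => simp [IsWalk, ih, and_assoc]

lemma exists_eq_append_of_not_reduced (hp : ¬ G.Reduced p) :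
    ∃ p₁ e p₂, p = p₁ ++ e :: G.bar e :: p₂ := by
  by_contra! hne
  exact hp (List.isChain_iff_forall_rel_of_append_cons_cons.2
    fun e f p₁ p₂ hp hf => hne p₁ e p₂ (hf ▸ hp))

lemma IsWalk.of_backtracking {p₁ p₂ : List G.E} {e : G.E}
    (h : G.IsWalk (p₁ ++ e :: G.bar e :: p₂) v w) : G.IsWalk (p₁ ++ p₂) v w := by
  obtain ⟨u, hp₁, rfl, -, hp₂⟩ := isWalk_append.1 h
  exact isWalk_append.2 ⟨_, hp₁, hp₂⟩

section Holonomy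

variable {M : Type*} [Group M] {σ : G.E → M}
  (hT : G.IsSpanningTree T) (hσ : ∀ e, σ (G.bar e) = (σ e)⁻¹)
include hT hσ

lemma prod_map_eq_one_of_isWalk (hpT : ∀ e ∈ p, e ∈ T) (hp : G.IsWalk p v v) :
    (p.map σ).prod = 1 := by
  induction hlen : p.length using Nat.strong_induction_on generalizing p with
  | _ k ih =>
    rcases eq_or_ne p [] with rfl | hne
    · simp
    obtain ⟨p₁, e, p₂, rfl⟩ := exists_eq_append_of_not_reduced (hT.2.2 v p hne hpT hp)
    have hshort : ((p₁ ++ p₂).map σ).prod = 1 :=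
      ih _ (by simp [← hlen]) (fun e he => hpT e (by grind))
        hp.of_backtracking rfl
    simpa [hσ] using hshort

lemma prod_map_eq_prod_map_of_isWalk (hpT : ∀ e ∈ p, e ∈ T) (hqT : ∀ e ∈ q, e ∈ T)
    (hp : G.IsWalk p v w) (hq : G.IsWalk q v w) : (p.map σ).prod = (q.map σ).prod := by
  obtain ⟨r, hrT, hr⟩ := hT.2.1 w v
  have hclosed {s : List G.E} (hsT : ∀ e ∈ s, e ∈ T) (hs : G.IsWalk s v w) :
      (s.map σ).prod * (r.map σ).prod = 1 := by
    rw [← List.prod_append, ← List.map_append]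
    exact prod_map_eq_one_of_isWalk hT hσ (List.forall_mem_append.2 ⟨hsT, hrT⟩)
      (isWalk_append.2 ⟨w, hs, hr⟩)
  exact mul_right_cancel ((hclosed hpT hp).trans (hclosed hqT hq).symm)

lemma exists_potential : ∃ τ : G.V → M, ∀ e ∈ T, τ (G.o e) = σ e * τ (G.t e) := by
  rcases isEmpty_or_nonempty G.V with _ | ⟨⟨v₀⟩⟩
  · exact ⟨isEmptyElim, fun e => isEmptyElim (G.o e)⟩
  choose walk hwalkT hwalk using fun v => hT.2.1 v v₀
  refine ⟨fun v => ((walk v).map σ).prod, fun e he => ?_⟩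
  exact prod_map_eq_prod_map_of_isWalk hT hσ (hwalkT _)
    (List.forall_mem_cons.2 ⟨he, hwalkT (G.t e)⟩) (hwalk _) ⟨rfl, hwalk _⟩

end Holonomy

lemma IsOrientation.exists_bar_eq_inv {M : Type*} [InvolutiveInv M] {P : G.E → M → Prop}
    (hO : G.IsOrientation O) (hP : ∀ e, ∃ m, P e m) (hinv : ∀ e m, P e m → P (G.bar e) m⁻¹) :
    ∃ σ : G.E → M, (∀ e, P e (σ e)) ∧ ∀ e, σ (G.bar e) = (σ e)⁻¹ := by
  classical
  choose c hc using hP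
  refine ⟨fun e => if e ∈ O then c e else (c (G.bar e))⁻¹, fun e => ?_, fun e => ?_⟩
  · beta_reduce
    split_ifs
    · exact hc e
    · simpa [G.bar_bar] using hinv _ _ (hc (G.bar e))
  · have := hO e
    by_cases he : e ∈ O <;> simp_all [G.bar_bar]

end SerreGraph

/-! ### Free actions on large sets -/

section FreeActions

open Function

variable {H Z Z₁ Z₂ Ω β K : Type*} [Group H] [MulAction H Z] [MulAction H Z₁] [MulAction H Z₂]

lemma nonempty_prod_equiv [Infinite K] [Nonempty Z] (i : Z ↪ K) : Nonempty (Z × K ≃ K) := by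
  obtain ⟨square⟩ : Nonempty (K × K ≃ K) :=
    Cardinal.eq.1 (Cardinal.mul_eq_self (Cardinal.aleph0_le_mk K))
  exact ((i.prodMap (.refl K)).trans square.toEmbedding).antisymm
    (.sectR (Classical.arbitrary Z) K)

lemma exists_prod_equiv_prod_of_surjective [Infinite K] {b : Ω → β} (hb : Surjective b)
    (i : Ω ↪ K) : ∃ E : Ω × K ≃ β × K, ∀ x, (E x).1 = b x.1 := by
  have hfiber (y : β) : Nonempty ({ω // b ω = y} × K ≃ K) :=
    have : Nonempty {ω // b ω = y} := let ⟨ω, hω⟩ := hb y; ⟨ω, hω⟩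
    nonempty_prod_equiv ((Embedding.subtype _).trans i)
  let E : Ω × K ≃ β × K :=
    calc Ω × K ≃ (Σ y, {ω // b ω = y}) × K := (Equiv.sigmaFiberEquiv b).symm.prodCongr (.refl K)
      _ ≃ Σ y, {ω // b ω = y} × K := Equiv.sigmaProdDistrib _ K
      _ ≃ Σ _ : β, K := Equiv.sigmaCongrRight fun y => (hfiber y).some
      _ ≃ β × K := Equiv.sigmaEquivProd β K
  exact ⟨E, fun _ => rfl⟩

variable (H Z) in
lemma exists_equiv_prod_orbitRelQuotient [IsCancelSMul H Z] :
    ∃ E : Z ≃ H × MulAction.orbitRel.Quotient H Z,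
      (∀ (h : H) z, E (h • z) = (h * (E z).1, (E z).2)) ∧
      ∀ z, (E z).2 = Quotient.mk _ z := by
  let F (x : H × MulAction.orbitRel.Quotient H Z) : Z := x.1 • x.2.out
  have hclass (x) : Quotient.mk _ (F x) = x.2 :=
    (Quotient.sound (MulAction.mem_orbit x.2.out x.1)).trans (Quotient.out_eq x.2)
  have hF : Bijective F := by
    refine ⟨fun ⟨h, ω⟩ ⟨h', ω'⟩ heq => ?_, fun z => ?_⟩
    · obtain rfl : ω = ω' :=
        (hclass (h, ω)).symm.trans ((congrArg _ heq).trans (hclass (h', ω')))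
      rw [IsCancelSMul.right_cancel h h' _ heq]
    · obtain ⟨h, hh⟩ := (MulAction.orbitRel H Z).symm (Quotient.mk_out z)
      exact ⟨(h, Quotient.mk _ z), hh⟩
  refine ⟨(Equiv.ofBijective F hF).symm, fun h z => ?_, fun z => ?_⟩
  · obtain ⟨x, rfl⟩ := hF.surjective z
    rw [Equiv.symm_apply_eq, Equiv.ofBijective_symm_apply_apply F hF]
    exact (mul_smul h x.1 x.2.out).symm
  · rw [← hclass, Equiv.ofBijective_apply_symm_apply F hF]

lemma exists_equivariant_equiv_prod [IsCancelSMul H Z] [Infinite K] {b : Z → β} (hb : Surjective b)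
    (hinv : ∀ (h : H) z, b (h • z) = b z) (i : Z ↪ K) :
    ∃ E : Z × K ≃ H × β × K, (∀ (h : H) z k, E (h • z, k) = (h * (E (z, k)).1, (E (z, k)).2)) ∧
      ∀ x, (E x).2.1 = b x.1 := by
  obtain ⟨E, hE_smul, hE_mk⟩ := exists_equiv_prod_orbitRelQuotient H Z
  let b' : MulAction.orbitRel.Quotient H Z → β :=
    Quotient.lift b (by rintro _ z ⟨h, rfl⟩; exact hinv h z)
  have hb' : Surjective b' := fun y => let ⟨z, hz⟩ := hb y; ⟨Quotient.mk _ z, hz⟩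
  obtain ⟨E', hE'⟩ := exists_prod_equiv_prod_of_surjective hb'
    ((⟨Quotient.out, Quotient.out_injective⟩ : MulAction.orbitRel.Quotient H Z ↪ Z).trans i)
  let F : Z × K ≃ H × β × K :=
    calc Z × K ≃ (H × MulAction.orbitRel.Quotient H Z) × K := E.prodCongr (.refl K)
      _ ≃ H × MulAction.orbitRel.Quotient H Z × K := Equiv.prodAssoc _ _ K
      _ ≃ H × β × K := (Equiv.refl H).prodCongr E'
  refine ⟨F, fun h z k => ?_, fun x => ?_⟩
  · simp [F, hE_smul]
  · simp [F, hE', hE_mk, b']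

lemma exists_equivariant_prod_equiv_prod [IsCancelSMul H Z₁] [IsCancelSMul H Z₂] [Infinite K]
    {b₁ : Z₁ → β} {b₂ : Z₂ → β} (hb₁ : Surjective b₁) (hb₂ : Surjective b₂)
    (hinv₁ : ∀ (h : H) z, b₁ (h • z) = b₁ z) (hinv₂ : ∀ (h : H) z, b₂ (h • z) = b₂ z)
    (i₁ : Z₁ ↪ K) (i₂ : Z₂ ↪ K) :
    ∃ σ : Z₁ × K ≃ Z₂ × K, (∀ (h : H) z k, σ (h • z, k) = (h • (σ (z, k)).1, (σ (z, k)).2)) ∧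
      ∀ x, b₂ (σ x).1 = b₁ x.1 := by
  obtain ⟨E₁, hE₁_smul, hE₁⟩ := exists_equivariant_equiv_prod hb₁ hinv₁ i₁
  obtain ⟨E₂, hE₂_smul, hE₂⟩ := exists_equivariant_equiv_prod hb₂ hinv₂ i₂
  refine ⟨E₁.trans E₂.symm, fun h z k => ?_, fun x => ?_⟩
  · rw [Equiv.trans_apply, Equiv.symm_apply_eq, hE₂_smul]
    simp [hE₁_smul]
  · simp [← hE₁, ← hE₂]

end FreeActions

section EdgeFlip

open Function

variable {H K L₁ L₂ S₁ S₂ : Type*} [Group H] [Group L₁] [Group L₂]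
  [MulAction L₁ S₁] [MulAction L₂ S₂]

lemma isCancelSMul_compHom_prod {L : Type*} [Group L] (X : Type*) [MulAction L X] {j : H →* L}
    (hj : Injective j) :
    letI := MulAction.compHom (L × X) j
    IsCancelSMul H (L × X) :=
  letI := MulAction.compHom (L × X) j
  { right_cancel' _ _ _ hab := hj (mul_right_cancel (congrArg Prod.fst hab)) }

lemma surjective_snd_eq {X Y : Type*} [Nonempty X] [Nontrivial Y] (s : Y) :
    Surjective fun z : X × Y => z.2 = s := by
  intro P
  obtain ⟨s', hs'⟩ := exists_ne s
  by_cases hP : P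
  · exact ⟨(Classical.arbitrary X, s), by simp [hP]⟩
  · exact ⟨(Classical.arbitrary X, s'), by simp [hP, hs']⟩

lemma exists_equivariant_flip [Nontrivial S₁] [Nontrivial S₂] [Infinite K]
    {j₁ : H →* L₁} {j₂ : H →* L₂} (hj₁ : Injective j₁) (hj₂ : Injective j₂) {s₁ : S₁} {s₂ : S₂}
    (hs₁ : ∀ a, j₁ a • s₁ = s₁) (hs₂ : ∀ a, j₂ a • s₂ = s₂) (i₁ : L₁ × S₁ ↪ K) (i₂ : L₂ × S₂ ↪ K) :
    ∃ σ : (L₁ × S₁) × K ≃ (L₂ × S₂) × K,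
      (∀ a z k, σ (j₁ a • z, k) = (j₂ a • (σ (z, k)).1, (σ (z, k)).2)) ∧
      ∀ x, (σ x).1.2 = s₂ ∨ x.1.2 = s₁ := by
  let := MulAction.compHom (L₁ × S₁) j₁
  let := MulAction.compHom (L₂ × S₂) j₂
  have := isCancelSMul_compHom_prod S₁ hj₁
  have := isCancelSMul_compHom_prod S₂ hj₂
  have hinv₁ (a : H) (z : L₁ × S₁) : (¬ (j₁ a • z).2 = s₁) = ¬ z.2 = s₁ := by
    rw [← smul_left_cancel_iff (j₁ a) (x := z.2), hs₁, Prod.smul_snd]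
  have hinv₂ (a : H) (z : L₂ × S₂) : ((j₂ a • z).2 = s₂) = (z.2 = s₂) := by
    rw [← smul_left_cancel_iff (j₂ a) (x := z.2), hs₂, Prod.smul_snd]
  have hnot : Surjective Not := fun P => ⟨¬ P, propext not_not⟩
  -- Match the points outside the direction `s₁` with those in the direction `s₂`.
  obtain ⟨σ, hσ_smul, hσ⟩ := exists_equivariant_prod_equiv_prod
    (hnot.comp (surjective_snd_eq s₁)) (surjective_snd_eq s₂) hinv₁ hinv₂ i₁ i₂
  refine ⟨σ, hσ_smul, fun x => ?_⟩
  by_cases hx : x.1.2 = s₁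
  · exact .inr hx
  · exact .inl ((hσ x).mpr hx)

end EdgeFlip

namespace GraphOfGroups

variable {G : SerreGraph} (𝒢 : GraphOfGroups G) {T : Set G.E}

section Directions

variable {v : G.V}

/-- The direction of the edge `e` at its terminal vertex `v`: the trivial coset of `Γ_e`. -/
def edgeDir (e : {e // G.t e = v}) : 𝒢.Sv v := Sum.inr ⟨e, QuotientGroup.mk 1⟩

lemma smul_edgeDir (e : {e // G.t e = v}) (γ : 𝒢.Gv v) :
    γ • 𝒢.edgeDir e = Sum.inr ⟨e, QuotientGroup.mk γ⟩ :=
  congrArg (fun δ => (Sum.inr ⟨e, QuotientGroup.mk δ⟩ : 𝒢.Sv v)) (mul_one γ)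

lemma smul_edgeDir_eq_edgeDir_iff {e f : {e // G.t e = v}} {γ : 𝒢.Gv v} :
    γ • 𝒢.edgeDir e = 𝒢.edgeDir f ↔ e = f ∧ γ ∈ 𝒢.SvSubgroup v e := by
  rw [smul_edgeDir, edgeDir, Sum.inr.injEq, Sigma.mk.injEq]
  refine and_congr_right ?_
  rintro rfl
  rw [heq_eq_eq, eq_comm, QuotientGroup.eq, inv_one, one_mul]

lemma h_smul_edgeDir (e : G.E) (a : 𝒢.Ge e) :
    𝒢.h e a • 𝒢.edgeDir ⟨e, rfl⟩ = 𝒢.edgeDir ⟨e, rfl⟩ :=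
  𝒢.smul_edgeDir_eq_edgeDir_iff.2 ⟨rfl, a, rfl⟩

end Directions

section FundamentalGroup

variable (T)

lemma edgeElt_mul_edgeElt_bar (e : G.E) : 𝒢.edgeElt T e * 𝒢.edgeElt T (G.bar e) = 1 :=
  𝒢.mk_rel_one (Or.inr (Or.inl ⟨e, rfl⟩))

lemma edgeElt_mul_vtxIncl (e : G.E) (a : 𝒢.Ge e) :
    𝒢.edgeElt T e * 𝒢.vtxIncl T (G.t (G.bar e)) (𝒢.h (G.bar e) (𝒢.barEquiv e a)) =
      𝒢.vtxIncl T (G.t e) (𝒢.h e a) * 𝒢.edgeElt T e :=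
  mul_inv_eq_iff_eq_mul.1 (mul_inv_eq_one.1 (𝒢.mk_rel_one (Or.inr (Or.inr (Or.inl ⟨e, a, rfl⟩)))))

lemma edgeElt_eq_one {e : G.E} (he : e ∈ T) : 𝒢.edgeElt T e = 1 :=
  𝒢.mk_rel_one (Or.inr (Or.inr (Or.inr ⟨e, he, rfl⟩)))

variable {M : Type*} [Group M] (ρ : ∀ v, 𝒢.Gv v →* M) {σ : G.E → M}
  (hbar : ∀ e, σ (G.bar e) = (σ e)⁻¹)
  (hconj : ∀ e a, σ e * ρ _ (𝒢.h (G.bar e) (𝒢.barEquiv e a)) = ρ _ (𝒢.h e a) * σ e)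
include hbar hconj

lemma exists_pi1_lift (hT : ∀ e ∈ T, σ e = 1) :
    ∃ π : 𝒢.pi1 T →* M, (∀ v γ, π (𝒢.vtxIncl T v γ) = ρ v γ) ∧ ∀ e, π (𝒢.edgeElt T e) = σ e := by
  have hrels : ∀ r ∈ 𝒢.rels T, FreeGroup.lift (Sum.elim (fun x => ρ x.1 x.2) σ) r = 1 := by
    rintro r (⟨v, g, g', rfl⟩ | ⟨e, rfl⟩ | ⟨e, a, rfl⟩ | ⟨e, he, rfl⟩)
    · simp
    · simp [hbar]
    · simp [hconj]
    · simp [hT e he]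
  exact ⟨PresentedGroup.toGroup hrels, fun v γ => PresentedGroup.toGroup.of hrels,
    fun e => PresentedGroup.toGroup.of hrels⟩

lemma exists_pi1_hom_of_isSpanningTree (hT : G.IsSpanningTree T) :
    ∃ (π : 𝒢.pi1 T →* M) (τ : G.V → M),
      (∀ v γ, π (𝒢.vtxIncl T v γ) = (τ v)⁻¹ * ρ v γ * τ v) ∧
      ∀ e, π (𝒢.edgeElt T e) = (τ (G.t e))⁻¹ * σ e * τ (G.t (G.bar e)) := by
  obtain ⟨τ, hτ⟩ := SerreGraph.exists_potential (σ := fun e => (σ e)⁻¹) hT (fun e => by rw [hbar])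
  obtain ⟨π, hπ_vtx, hπ_edge⟩ := 𝒢.exists_pi1_lift T
    (fun v => (MulAut.conj (τ v)⁻¹).toMonoidHom.comp (ρ v))
    (σ := fun e => (τ (G.t e))⁻¹ * σ e * τ (G.t (G.bar e)))
    (fun e => by simp [hbar, G.bar_bar, mul_assoc])
    (fun e a => by simpa [mul_assoc] using congrArg (· * τ _) (hconj e a))
    (fun e he => by simp [show τ (G.t (G.bar e)) = _ from hτ e he])
  exact ⟨π, τ, fun v γ => by simp [hπ_vtx], hπ_edge⟩

end FundamentalGroup

end GraphOfGroups

section Transport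

variable {L Z K : Type*} [Group L] [MulAction L Z]

/-- The action of `L` on `K` obtained from its action on the first factor of `Z × K ≃ K`. -/
def permHomOfProdEquiv (E : Z × K ≃ K) : L →* Equiv.Perm K :=
  MonoidHom.mk' (fun γ => E.permCongr ((MulAction.toPerm γ).prodCongr (Equiv.refl K)))
    (fun γ δ => by ext x; simp [mul_smul, Prod.map])

@[simp]
lemma permHomOfProdEquiv_apply_apply (E : Z × K ≃ K) (γ : L) (x : K) :
    permHomOfProdEquiv E γ x = E (γ • (E.symm x).1, (E.symm x).2) := rfl

end Transport

namespace GraphOfGroups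

variable {G : SerreGraph} (𝒢 : GraphOfGroups G) {T O : Set G.E}

section PingPong

open Function Equiv

/-- A permutation of `K` that conjugates the two actions of `Γ_e` into each other and throws
everything outside the direction of `e` at its origin into the direction of `e` at its end. -/
structure IsEdgeFlip {K : Type*} (ρ : ∀ v, 𝒢.Gv v →* Perm K) (d : ∀ v, K → 𝒢.Sv v) (e : G.E)
    (σ : Perm K) : Prop where
  conj : ∀ a, σ * ρ _ (𝒢.h (G.bar e) (𝒢.barEquiv e a)) = ρ _ (𝒢.h e a) * σ
  dir : ∀ x, d _ (σ x) = 𝒢.edgeDir ⟨e, rfl⟩ ∨ d _ x = 𝒢.edgeDir ⟨G.bar e, rfl⟩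

/-- Directions at each vertex for a set with an action of the fundamental group: compatible with
the vertex groups, and such that the edge element of `e` plays ping-pong with the two directions
of `e`. -/
structure IsPingPong (T : Set G.E) {X : Type*} [MulAction (𝒢.pi1 T) X] (D : ∀ v, X → 𝒢.Sv v) :
    Prop where
  smul : ∀ v γ x, D v (𝒢.vtxIncl T v γ • x) = γ • D v x
  edge : ∀ e x, D _ (𝒢.edgeElt T e • x) = 𝒢.edgeDir ⟨e, rfl⟩ ∨ D _ x = 𝒢.edgeDir ⟨G.bar e, rfl⟩

variable {𝒢}

lemma IsEdgeFlip.inv {K : Type*} {ρ : ∀ v, 𝒢.Gv v →* Perm K} {d : ∀ v, K → 𝒢.Sv v} {e : G.E}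
    {σ : Perm K} (hσ : 𝒢.IsEdgeFlip ρ d e σ) : 𝒢.IsEdgeFlip ρ d (G.bar e) σ⁻¹ where
  conj := by
    have htransport {e' : G.E} (he : e' = e) {a : 𝒢.Ge e} {a' : 𝒢.Ge e'} (ha : a' ≍ a) :
        ρ _ (𝒢.h e' a') = ρ _ (𝒢.h e a) := by
      subst he
      rw [eq_of_heq ha]
    refine (𝒢.barEquiv e).surjective.forall.2 fun a => ?_
    rw [htransport (G.bar_bar e) (𝒢.barEquiv_coh e a), inv_mul_eq_iff_eq_mul, ← mul_assoc,
      hσ.conj, mul_inv_cancel_right]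
  dir x := by
    have htransport {e' : G.E} (he : e' = e) (hx : d _ x = 𝒢.edgeDir ⟨e, rfl⟩) :
        d _ x = 𝒢.edgeDir ⟨e', rfl⟩ := by
      subst he
      exact hx
    have hdir := hσ.dir (σ⁻¹ x)
    rw [← Perm.mul_apply, mul_inv_cancel, Perm.one_apply] at hdir
    exact hdir.symm.imp_right (htransport (G.bar_bar e))

variable (𝒢) in
lemma exists_isEdgeFlip : ∃ (K : Type) (ρ : ∀ v, 𝒢.Gv v →* Perm K) (d : ∀ v, K → 𝒢.Sv v),
    (∀ v γ x, d v (ρ v γ x) = γ • d v x) ∧ (∀ v, Surjective (d v)) ∧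
      ∀ e, ∃ σ, 𝒢.IsEdgeFlip ρ d e σ := by
  let K := ℕ ⊕ Σ v, 𝒢.Gv v × 𝒢.Sv v
  let incl (v : G.V) : 𝒢.Gv v × 𝒢.Sv v ↪ K :=
    (Embedding.sigmaMk (β := fun v => 𝒢.Gv v × 𝒢.Sv v) v).trans Embedding.inr
  let E (v : G.V) : (𝒢.Gv v × 𝒢.Sv v) × K ≃ K := (nonempty_prod_equiv (incl v)).some
  refine ⟨K, fun v => permHomOfProdEquiv (E v), fun v x => ((E v).symm x).1.2,
    fun v γ x => by simp, fun v s => ⟨E v ((1, s), Sum.inl 0), by simp⟩, fun e => ?_⟩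
  have hnontrivial (e : G.E) : Nontrivial (𝒢.Sv (G.t e)) :=
    ⟨Sum.inl 1, 𝒢.edgeDir ⟨e, rfl⟩, Sum.inl_ne_inr⟩
  have := hnontrivial e
  have := hnontrivial (G.bar e)
  obtain ⟨σ, hσ_smul, hσ⟩ := exists_equivariant_flip
    (j₁ := (𝒢.h (G.bar e)).comp (𝒢.barEquiv e).toMonoidHom)
    ((𝒢.h_inj (G.bar e)).comp (𝒢.barEquiv e).injective) (𝒢.h_inj e)
    (fun a => 𝒢.h_smul_edgeDir (G.bar e) (𝒢.barEquiv e a)) (𝒢.h_smul_edgeDir e)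
    (incl (G.t (G.bar e))) (incl (G.t e))
  refine ⟨(E _).symm.trans (σ.trans (E _)), fun a => ?_, fun x => by simpa using hσ _⟩
  ext1 x
  simpa using congrArg (E (G.t e)) (hσ_smul a ((E _).symm x).1 ((E _).symm x).2)

variable (𝒢) in
lemma exists_isPingPong (hT : G.IsSpanningTree T) (hO : G.IsOrientation O) :
    ∃ (X : Type) (_ : MulAction (𝒢.pi1 T) X) (D : ∀ v, X → 𝒢.Sv v),
      𝒢.IsPingPong T D ∧ ∀ v, Surjective (D v) := by
  obtain ⟨K, ρ, d, hd_smul, hd_surj, hflip⟩ := 𝒢.exists_isEdgeFlip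
  obtain ⟨σ, hσ, hσ_bar⟩ := hO.exists_bar_eq_inv hflip fun _ _ => IsEdgeFlip.inv
  obtain ⟨π, τ, hπ_vtx, hπ_edge⟩ :=
    𝒢.exists_pi1_hom_of_isSpanningTree T ρ hσ_bar (fun e => (hσ e).conj) hT
  let action : MulAction (𝒢.pi1 T) K := MulAction.compHom K π
  refine ⟨K, action, fun v x => d v (τ v x), ⟨fun v γ x => ?_, fun e x => ?_⟩,
    fun v => (hd_surj v).comp (τ v).surjective⟩
  · change d v (τ v (π (𝒢.vtxIncl T v γ) x)) = γ • d v (τ v x)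
    simp [hπ_vtx, hd_smul]
  · change d _ (τ _ (π (𝒢.edgeElt T e) x)) = _ ∨ _
    simpa [hπ_edge] using (hσ e).dir (τ _ x)

end PingPong
end GraphOfGroups

/-! ### The Bass–Serre tree -/

namespace GraphOfGroups

variable {G : SerreGraph} (𝒢 : GraphOfGroups G) {T : Set G.E}

section BassSerreGraph

variable (T) in
/-- The vertices of the Bass–Serre tree: the cosets of the vertex groups. -/
abbrev TreeVertex : Type := Σ v, 𝒢.pi1 T ⧸ (𝒢.vtxIncl T v).range

/-- The tree vertex `g Γ_v`. -/
abbrev vtx (g : 𝒢.pi1 T) (v : G.V) : 𝒢.TreeVertex T := ⟨v, QuotientGroup.mk g⟩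

/-- The tree vertex adjacent to `g Γ_{t(e)}` along the translate by `g` of the edge `e`. -/
def farVtx (g : 𝒢.pi1 T) (e : G.E) : 𝒢.TreeVertex T :=
  𝒢.vtx (g * 𝒢.edgeElt T e) (G.t (G.bar e))

variable (T) in
/-- The Bass–Serre tree, as a simple graph on the cosets of the vertex groups. -/
def treeGraph : SimpleGraph (𝒢.TreeVertex T) :=
  SimpleGraph.fromRel fun w w' => ∃ g e, w = 𝒢.vtx g (G.t e) ∧ w' = 𝒢.farVtx g e

variable {𝒢}

lemma vtx_eq_vtx_iff {g g' : 𝒢.pi1 T} {v : G.V} :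
    𝒢.vtx g v = 𝒢.vtx g' v ↔ ∃ γ, g * 𝒢.vtxIncl T v γ = g' := by
  simp only [vtx, Sigma.mk.injEq, true_and, heq_eq_eq, QuotientGroup.eq, MonoidHom.mem_range,
    eq_inv_mul_iff_mul_eq]

lemma farVtx_mul_edgeElt_bar (g : 𝒢.pi1 T) (e : G.E) :
    𝒢.farVtx (g * 𝒢.edgeElt T e) (G.bar e) = 𝒢.vtx g (G.t e) := by
  rw [farVtx, mul_assoc, edgeElt_mul_edgeElt_bar, mul_one, G.bar_bar]

lemma exists_of_treeGraph_adj {w w' : 𝒢.TreeVertex T} (hw : (𝒢.treeGraph T).Adj w w') :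
    ∃ g e, w = 𝒢.vtx g (G.t e) ∧ w' = 𝒢.farVtx g e := by
  obtain ⟨-, hw | ⟨g, e, hw', hw⟩⟩ := hw
  · exact hw
  · exact ⟨_, G.bar e, hw, hw'.trans (farVtx_mul_edgeElt_bar g e).symm⟩

lemma treeGraph_reachable_farVtx (g : 𝒢.pi1 T) (e : G.E) :
    (𝒢.treeGraph T).Reachable (𝒢.vtx g (G.t e)) (𝒢.farVtx g e) := by
  by_cases heq : 𝒢.vtx g (G.t e) = 𝒢.farVtx g e
  · rw [heq]
  · exact SimpleGraph.Adj.reachable ⟨heq, .inl ⟨g, e, rfl, rfl⟩⟩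

lemma treeGraph_reachable_of_isWalk (g : 𝒢.pi1 T) {p : List G.E} (hp : ∀ e ∈ p, e ∈ T)
    {v v' : G.V} (hwalk : G.IsWalk p v v') :
    (𝒢.treeGraph T).Reachable (𝒢.vtx g v') (𝒢.vtx g v) := by
  induction p generalizing v with
  | nil => rw [show v = v' from hwalk]
  | cons e p ih =>
    rw [List.forall_mem_cons] at hp
    obtain ⟨rfl, hwalk⟩ := hwalk
    have hfar := treeGraph_reachable_farVtx g e
    rw [farVtx, edgeElt_eq_one 𝒢 T hp.1, mul_one] at hfar
    exact (ih hp.2 hwalk).trans hfar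

lemma closure_vtxIncl_union_edgeElt :
    Subgroup.closure ((⋃ v, Set.range (𝒢.vtxIncl T v)) ∪ Set.range (𝒢.edgeElt T)) = ⊤ := by
  refine top_le_iff.1 ((PresentedGroup.closure_range_of (𝒢.rels T)).ge.trans
    (Subgroup.closure_mono ?_))
  rintro _ ⟨⟨v, γ⟩ | e, rfl⟩
  · exact .inl (Set.mem_iUnion.2 ⟨v, γ, rfl⟩)
  · exact .inr ⟨e, rfl⟩

lemma treeGraph_preconnected (hT : G.IsSpanningTree T) : (𝒢.treeGraph T).Preconnected := by
  have hvtx (g : 𝒢.pi1 T) (v v' : G.V) : (𝒢.treeGraph T).Reachable (𝒢.vtx g v) (𝒢.vtx g v') := by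
    obtain ⟨p, hp, hwalk⟩ := hT.2.1 v' v
    exact treeGraph_reachable_of_isWalk g hp hwalk
  let C (h : 𝒢.pi1 T) : Prop :=
    ∀ g v, (𝒢.treeGraph T).Reachable (𝒢.vtx g v) (𝒢.vtx (g * h) v)
  have hC (h : 𝒢.pi1 T) : C h := by
    have hmem : h ∈ Subgroup.closure _ :=
      closure_vtxIncl_union_edgeElt (𝒢 := 𝒢) (T := T) ▸ Subgroup.mem_top h
    induction hmem using Subgroup.closure_induction with
    | mem h hh =>
      rcases hh with hh | ⟨e, rfl⟩
      · obtain ⟨u, γ, rfl⟩ := Set.mem_iUnion.1 hh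
        intro g v
        exact (hvtx g v u).trans (vtx_eq_vtx_iff.2 ⟨γ, rfl⟩ ▸ hvtx _ u v)
      · exact fun g v => (hvtx g v _).trans ((treeGraph_reachable_farVtx g e).trans (hvtx _ _ v))
    | one => exact fun g v => by rw [mul_one]
    | mul h k _ _ ih_h ih_k =>
      exact fun g v => (ih_h g v).trans (mul_assoc g h k ▸ ih_k (g * h) v)
    | inv h _ ih => exact fun g v => by simpa using (ih (g * h⁻¹) v).symm
  rintro ⟨v, c⟩ ⟨v', c'⟩
  obtain ⟨g, rfl⟩ := QuotientGroup.mk_surjective c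
  obtain ⟨g', rfl⟩ := QuotientGroup.mk_surjective c'
  have hg := hC (g⁻¹ * g') g v'
  rw [mul_inv_cancel_left] at hg
  exact (hvtx g v v').trans hg

end BassSerreGraph

section Separation

variable {X : Type*} [MulAction (𝒢.pi1 T) X] {D : ∀ v, X → 𝒢.Sv v}
variable {𝒢}

lemma IsPingPong.farVtx_eq_farVtx (hD : 𝒢.IsPingPong T D) {v : G.V} {g g' : 𝒢.pi1 T}
    {e e' : {e // G.t e = v}} (hg : 𝒢.vtx g v = 𝒢.vtx g' v) {x : X}
    (hx : D v (g⁻¹ • x) = 𝒢.edgeDir e) (hx' : D v (g'⁻¹ • x) = 𝒢.edgeDir e') :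
    𝒢.farVtx g e.1 = 𝒢.farVtx g' e'.1 := by
  obtain ⟨γ, rfl⟩ := vtx_eq_vtx_iff.1 hg
  rw [mul_inv_rev, ← map_inv, mul_smul, hD.smul, hx, smul_edgeDir_eq_edgeDir_iff,
    inv_mem_iff] at hx'
  obtain ⟨rfl, hγ⟩ := hx'
  obtain ⟨e, rfl⟩ := e
  obtain ⟨a, rfl⟩ : ∃ a, 𝒢.h e a = γ := hγ
  rw [farVtx, farVtx, vtx_eq_vtx_iff]
  exact ⟨_, by rw [mul_assoc, edgeElt_mul_vtxIncl, mul_assoc]⟩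

lemma IsPingPong.edge_inv_smul (hD : 𝒢.IsPingPong T D) (g : 𝒢.pi1 T) (e : G.E) (x : X) :
    D _ (g⁻¹ • x) = 𝒢.edgeDir ⟨e, rfl⟩ ∨
      D _ ((g * 𝒢.edgeElt T e)⁻¹ • x) = 𝒢.edgeDir ⟨G.bar e, rfl⟩ := by
  simpa [smul_smul] using hD.edge e ((g * 𝒢.edgeElt T e)⁻¹ • x)

lemma IsPingPong.exists_edgeDir_of_isPath (hD : 𝒢.IsPingPong T D) {w w' : 𝒢.TreeVertex T}
    (p : (𝒢.treeGraph T).Walk w w') (hp : p.IsPath) (hne : w ≠ w') :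
    ∃ (v : G.V) (g : 𝒢.pi1 T) (e : {e // G.t e = v}) (v' : G.V) (g' : 𝒢.pi1 T)
      (e' : {e // G.t e = v'}), w = 𝒢.vtx g v ∧ w' = 𝒢.vtx g' v' ∧ 𝒢.farVtx g e.1 ∈ p.support ∧
        ∀ x, D v (g⁻¹ • x) = 𝒢.edgeDir e ∨ D v' (g'⁻¹ • x) = 𝒢.edgeDir e' := by
  induction p with
  | nil => exact absurd rfl hne
  | @cons w w₁ w' hadj q ih =>
    rw [SimpleGraph.Walk.cons_isPath_iff] at hp
    obtain ⟨hq, hw⟩ := hp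
    obtain ⟨k, f, rfl, rfl⟩ := exists_of_treeGraph_adj hadj
    have hmem : 𝒢.farVtx k f ∈ (SimpleGraph.Walk.cons hadj q).support :=
      List.mem_cons_of_mem _ q.start_mem_support
    by_cases heq : 𝒢.farVtx k f = w'
    · exact ⟨_, k, ⟨f, rfl⟩, _, _, ⟨G.bar f, rfl⟩, rfl, heq.symm, hmem, hD.edge_inv_smul k f⟩
    obtain ⟨v, g, e, v', g', e', hg, hg', he, hsep⟩ := ih hq heq
    refine ⟨_, k, ⟨f, rfl⟩, v', g', e', rfl, hg', hmem, fun x => ?_⟩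
    -- A point in the directions of both `e` and `bar f` at their vertex makes the path backtrack.
    refine (hsep x).elim (fun hx => (hD.edge_inv_smul k f x).imp_right fun hx' => ?_) .inr
    obtain rfl : G.t (G.bar f) = v := congrArg Sigma.fst hg
    rw [hD.farVtx_eq_farVtx hg.symm hx hx', farVtx_mul_edgeElt_bar] at he
    exact absurd he hw

lemma IsPingPong.exists_inr_or_eq_of_vtx_ne (hT : G.IsSpanningTree T) (hD : 𝒢.IsPingPong T D)
    {g g' : 𝒢.pi1 T} {v v' : G.V} (hne : 𝒢.vtx g v ≠ 𝒢.vtx g' v') :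
    ∃ s s', ∀ x, D v (g⁻¹ • x) = Sum.inr s ∨ D v' (g'⁻¹ • x) = s' := by
  obtain ⟨p, hp⟩ := (treeGraph_preconnected hT (𝒢.vtx g v) (𝒢.vtx g' v')).exists_isPath
  obtain ⟨u, k, e, u', k', e', hk, hk', -, hsep⟩ := hD.exists_edgeDir_of_isPath p hp hne
  obtain rfl : v = u := congrArg Sigma.fst hk
  obtain rfl : v' = u' := congrArg Sigma.fst hk'
  obtain ⟨γ, rfl⟩ := vtx_eq_vtx_iff.1 hk
  obtain ⟨γ', rfl⟩ := vtx_eq_vtx_iff.1 hk'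
  refine ⟨⟨e, QuotientGroup.mk γ⟩, γ' • 𝒢.edgeDir e', fun x => ?_⟩
  rw [← smul_edgeDir]
  simpa [mul_smul, ← map_inv, hD.smul, inv_smul_eq_iff] using hsep x

end Separation
end GraphOfGroups

/-! ### Directions on `S_𝒢` -/

namespace GraphOfGroups

variable {G : SerreGraph} (𝒢 : GraphOfGroups G) {T O : Set G.E}

section PushToEdge

variable (v : G.V) (e : G.E)

open Classical in
/-- The map `S_v → S_v` that sends `γ ∈ Γ_v` to the coset `γ Γ_e` if `e` ends at `v`, and fixes
everything else. -/
def pushToEdge : 𝒢.Sv v → 𝒢.Sv v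
  | Sum.inl γ => if h : G.t e = v then γ • 𝒢.edgeDir ⟨e, h⟩ else Sum.inl γ
  | Sum.inr s => Sum.inr s

variable {v} in
lemma pushToEdge_smul (γ : 𝒢.Gv v) (s : 𝒢.Sv v) :
    𝒢.pushToEdge v e (γ • s) = γ • 𝒢.pushToEdge v e s := by
  rcases s with δ | s
  · change 𝒢.pushToEdge v e (Sum.inl (γ * δ)) = _
    by_cases h : G.t e = v
    · simp only [pushToEdge, h, dite_true, mul_smul]
    · simp only [pushToEdge, h, dite_false]
      rfl
  · rfl

@[simp]
lemma pushToEdge_inl (γ : 𝒢.Gv (G.t e)) :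
    𝒢.pushToEdge (G.t e) e (Sum.inl γ) = γ • 𝒢.edgeDir ⟨e, rfl⟩ :=
  dif_pos rfl

@[simp]
lemma pushToEdge_edgeDir (f : {e // G.t e = v}) : 𝒢.pushToEdge v e (𝒢.edgeDir f) = 𝒢.edgeDir f :=
  rfl

end PushToEdge

section Extension

variable {X : Type*} [MulAction (𝒢.pi1 T) X]

/-- Directions on `S_𝒢` obtained from directions `D` on `X` and a base point `b u ∈ X` for every
vertex `u`: the pair `(g, u)` is read off at `g • b u`, and a coset `g Γ_e` at `g • b (t e)`, where
pushing to the edge `e` makes the result independent of the representative `g`. -/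
def extendDir (D : ∀ v, X → 𝒢.Sv v) (b : G.V → X) (v : G.V) : 𝒢.SG T O → 𝒢.Sv v
  | Sum.inl (g, u) => D v (g • b u)
  | Sum.inr ⟨e, c⟩ => 𝒢.pushToEdge v e.1 (D v (c.out • b (G.t e.1)))

variable {𝒢} {D : ∀ v, X → 𝒢.Sv v}

lemma smul_inl_one (v : G.V) (γ : 𝒢.Gv v) : γ • (Sum.inl 1 : 𝒢.Sv v) = Sum.inl γ :=
  congrArg Sum.inl (mul_one γ)

lemma IsPingPong.pushToEdge_mul_edgeHom (hD : 𝒢.IsPingPong T D) (hT : G.IsSpanningTree T)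
    (v : G.V) {e : G.E} {x : X} (hx : D (G.t e) x = Sum.inl 1) (g : 𝒢.pi1 T) (a : 𝒢.Ge e) :
    𝒢.pushToEdge v e (D v ((g * 𝒢.edgeHom T e a) • x)) = 𝒢.pushToEdge v e (D v (g • x)) := by
  have hax : D (G.t e) (𝒢.edgeHom T e a • x) = Sum.inl (𝒢.h e a) := by
    rw [edgeHom, MonoidHom.comp_apply, hD.smul, hx, smul_inl_one]
  by_cases heq : 𝒢.vtx 1 v = 𝒢.vtx g (G.t e)
  · obtain rfl : v = G.t e := congrArg Sigma.fst heq
    obtain ⟨γ, rfl⟩ := vtx_eq_vtx_iff.1 heq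
    rw [one_mul, mul_smul, hD.smul, hax, hD.smul, hx, pushToEdge_smul, pushToEdge_smul,
      pushToEdge_inl, pushToEdge_inl, one_smul, h_smul_edgeDir]
  · obtain ⟨s, s', hsep⟩ := hD.exists_inr_or_eq_of_vtx_ne hT (Ne.symm heq)
    have hg : D v (g • x) = s' := by
      simpa [hx] using hsep (g • x)
    have hga : D v ((g * 𝒢.edgeHom T e a) • x) = s' := by
      simpa [mul_smul, hax] using hsep ((g * 𝒢.edgeHom T e a) • x)
    rw [hg, hga]

variable {b : G.V → X}

lemma IsPingPong.extendDir_mk (hD : 𝒢.IsPingPong T D) (hT : G.IsSpanningTree T)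
    (hb : ∀ u, D u (b u) = Sum.inl 1) (v : G.V) (e : {e // e ∈ O}) (g : 𝒢.pi1 T) :
    𝒢.extendDir D b v (Sum.inr ⟨e, QuotientGroup.mk g⟩) =
      𝒢.pushToEdge v e.1 (D v (g • b (G.t e.1))) := by
  obtain ⟨⟨_, a, rfl⟩, ha⟩ := QuotientGroup.mk_out_eq_mul (𝒢.edgeSubgroupΓ T e.1) g
  rw [extendDir, ha]
  exact hD.pushToEdge_mul_edgeHom hT v (hb _) g a

lemma IsPingPong.extendDir (hD : 𝒢.IsPingPong T D) (hT : G.IsSpanningTree T)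
    (hb : ∀ u, D u (b u) = Sum.inl 1) :
    𝒢.IsPingPong T (𝒢.extendDir D b : ∀ v, 𝒢.SG T O → 𝒢.Sv v) where
  smul := by
    rintro v γ (⟨g, u⟩ | ⟨e, c⟩)
    · change D v ((𝒢.vtxIncl T v γ * g) • b u) = γ • D v (g • b u)
      rw [mul_smul, hD.smul]
    · obtain ⟨g, rfl⟩ := QuotientGroup.mk_surjective c
      change 𝒢.extendDir D b v (Sum.inr ⟨e, QuotientGroup.mk (𝒢.vtxIncl T v γ * g)⟩) = _
      rw [hD.extendDir_mk hT hb, hD.extendDir_mk hT hb, mul_smul, hD.smul, pushToEdge_smul]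
  edge := by
    rintro e (⟨g, u⟩ | ⟨e', c⟩)
    · change D _ ((𝒢.edgeElt T e * g) • b u) = _ ∨ D _ (g • b u) = _
      rw [mul_smul]
      exact hD.edge e _
    · obtain ⟨g, rfl⟩ := QuotientGroup.mk_surjective c
      change 𝒢.extendDir D b _ (Sum.inr ⟨e', QuotientGroup.mk (𝒢.edgeElt T e * g)⟩) = _ ∨ _
      rw [hD.extendDir_mk hT hb, hD.extendDir_mk hT hb, mul_smul]
      refine (hD.edge e (g • b (G.t e'.1))).imp (fun h => ?_) fun h => ?_
      all_goals rw [h, pushToEdge_edgeDir]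

lemma IsPingPong.extendDir_phiV (hD : 𝒢.IsPingPong T D) (hT : G.IsSpanningTree T)
    (hO : G.IsOrientation O) (hb : ∀ u, D u (b u) = Sum.inl 1) (v : G.V) (s : 𝒢.Sv v) :
    𝒢.extendDir D b v (𝒢.phiV T O hO v s) = s := by
  rcases s with γ | ⟨⟨e, rfl⟩, c⟩
  · change D v (𝒢.vtxIncl T v γ • b v) = _
    rw [hD.smul, hb, smul_inl_one]
  have hc : c.out • 𝒢.edgeDir ⟨e, rfl⟩ = Sum.inr ⟨⟨e, rfl⟩, c⟩ := by
    rw [smul_edgeDir, QuotientGroup.out_eq']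
  by_cases he : e ∈ O
  · simp only [phiV, he, dite_true]
    rw [hD.extendDir_mk hT hb, hD.smul, hb, pushToEdge_smul, pushToEdge_inl, one_smul, hc]
  · have hedge : D _ (𝒢.edgeElt T e • b (G.t (G.bar e))) = 𝒢.edgeDir ⟨e, rfl⟩ :=
      (hD.edge e _).resolve_right (by rw [hb]; exact Sum.inl_ne_inr)
    simp only [phiV, he, dite_false]
    rw [hD.extendDir_mk hT hb, mul_smul, hD.smul, pushToEdge_smul, hedge, pushToEdge_edgeDir, hc]

variable (𝒢) in
lemma exists_isPingPong_phiV_section (hT : G.IsSpanningTree T) (hO : G.IsOrientation O) :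
    ∃ q : ∀ v, 𝒢.SG T O → 𝒢.Sv v, 𝒢.IsPingPong T q ∧ ∀ v s, q v (𝒢.phiV T O hO v s) = s := by
  obtain ⟨X, _, D, hD, hsurj⟩ := 𝒢.exists_isPingPong hT hO
  choose b hb using fun u => hsurj u (Sum.inl 1)
  exact ⟨𝒢.extendDir D b, hD.extendDir hT hb, hD.extendDir_phiV hT hO hb⟩

end Extension
end GraphOfGroups

namespace GraphOfGroups

variable {G : SerreGraph} {𝒢 : GraphOfGroups G} {T : Set G.E}

section TreeDirections

variable {X : Type*} [MulAction (𝒢.pi1 T) X] {q : ∀ v, X → 𝒢.Sv v}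

variable (T) in
/-- The direction in which `x` is seen from the tree vertex `w = g Γ_v`, translated to `S_v` by the
chosen representative `g` of the coset. -/
def treeDir (q : ∀ v, X → 𝒢.Sv v) (w : 𝒢.TreeVertex T) (x : X) : 𝒢.Sv w.1 :=
  q w.1 (w.2.out⁻¹ • x)

lemma vtx_out (w : 𝒢.TreeVertex T) : 𝒢.vtx w.2.out w.1 = w :=
  congrArg (Sigma.mk w.1) (QuotientGroup.out_eq' w.2)

namespace IsPingPong

lemma isSeparating_treeDir (hq : 𝒢.IsPingPong T q) (hT : G.IsSpanningTree T) :
    IsSeparating (treeDir T q) := by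
  intro w w' hne
  rw [← vtx_out w, ← vtx_out w'] at hne
  obtain ⟨s, s', hsep⟩ := hq.exists_inr_or_eq_of_vtx_ne hT hne
  exact ⟨Sum.inr s, s', hsep⟩

lemma exists_treeDir_vtx_eq_smul (hq : 𝒢.IsPingPong T q) (g : 𝒢.pi1 T) (v : G.V) :
    ∃ γ : 𝒢.Gv v, ∀ x, treeDir T q (𝒢.vtx g v) x = γ • q v (g⁻¹ • x) := by
  obtain ⟨γ, hγ⟩ := vtx_eq_vtx_iff.1 (vtx_out (𝒢.vtx g v)).symm
  refine ⟨γ⁻¹, fun x => ?_⟩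
  rw [← hq.smul, smul_smul, map_inv, ← mul_inv_rev, hγ]
  rfl

lemma exists_treeDir_smul_eq_smul (hq : 𝒢.IsPingPong T q) (g : 𝒢.pi1 T) (w : 𝒢.TreeVertex T) :
    ∃ γ : 𝒢.Gv w.1, ∀ x, treeDir T q (g • w) (g • x) = γ • treeDir T q w x := by
  obtain ⟨v, c⟩ := w
  obtain ⟨k, rfl⟩ := QuotientGroup.mk_surjective c
  obtain ⟨γ, hγ⟩ := hq.exists_treeDir_vtx_eq_smul k v
  obtain ⟨δ, hδ⟩ := hq.exists_treeDir_vtx_eq_smul (g * k) v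
  refine ⟨δ * γ⁻¹, fun x => ?_⟩
  calc treeDir T q (𝒢.vtx (g * k) v) (g • x)
      = δ • q v ((g * k)⁻¹ • g • x) := hδ _
    _ = δ • q v (k⁻¹ • x) := by rw [smul_smul, mul_inv_rev, inv_mul_cancel_right]
    _ = (δ * γ⁻¹) • treeDir T q (𝒢.vtx k v) x := by rw [hγ, mul_smul, inv_smul_smul]

variable {n : ℕ} {f : ∀ v, (Fin (n + 1) → 𝒢.Sv v) → ℝ}

lemma transfer_treeDir_mem_invF (hq : 𝒢.IsPingPong T q) (hT : G.IsSpanningTree T) (hn : 2 ≤ n)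
    (halt : ∀ v, f v ∈ altF (𝒢.Sv v) n) (hinv : ∀ v, f v ∈ invF (𝒢.Gv v) (𝒢.Sv v) n) :
    transfer (treeDir T q) n (fun w : 𝒢.TreeVertex T => f w.1) ∈ invF (𝒢.pi1 T) X n := by
  refine (hq.isSeparating_treeDir hT).transfer_mem_invF hn (fun w => halt w.1) fun g w x => ?_
  obtain ⟨γ, hγ⟩ := hq.exists_treeDir_smul_eq_smul g w
  simp only [hγ]
  exact hinv w.1 γ _

lemma transfer_treeDir_comp (hq : 𝒢.IsPingPong T q) (hT : G.IsSpanningTree T) (hn : 2 ≤ n)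
    (halt : ∀ v, f v ∈ altF (𝒢.Sv v) n) (hinv : ∀ v, f v ∈ invF (𝒢.Gv v) (𝒢.Sv v) n) {v : G.V}
    {φ : 𝒢.Sv v → X} (hφ : Function.LeftInverse (q v) φ) (s : Fin (n + 1) → 𝒢.Sv v) :
    transfer (treeDir T q) n (fun w : 𝒢.TreeVertex T => f w.1) (φ ∘ s) = f v s := by
  have hQ := hq.isSeparating_treeDir hT
  by_cases hs : Function.Injective s
  · obtain ⟨γ, hγ⟩ := hq.exists_treeDir_vtx_eq_smul 1 v
    have hdir (i) : treeDir T q (𝒢.vtx 1 v) ((φ ∘ s) i) = γ • s i := by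
      rw [hγ, inv_one, one_smul, Function.comp_apply, hφ]
    have hw : IsBarycenter (treeDir T q) (φ ∘ s) (𝒢.vtx 1 v) := by
      simp only [IsBarycenter, hdir]
      exact (MulAction.injective γ).comp hs
    rw [hQ.transfer_apply_of_isBarycenter hn _ hw]
    simp only [hdir]
    exact hinv v γ s
  · rw [apply_eq_zero_of_mem_altF (hQ.transfer_mem_altF hn fun w => halt w.1)
      fun h => hs h.of_comp, apply_eq_zero_of_mem_altF (halt v) hs]

end IsPingPong

end TreeDirections

end GraphOfGroups

theorem barycentric_retraction_graph_of_groups_general (G : SerreGraph) (𝒢 : GraphOfGroups G)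
    (T : Set G.E) (hT : G.IsSpanningTree T) (O : Set G.E) (hO : G.IsOrientation O) :
    ∃ ψ : ∀ n : ℕ, (∀ v : G.V, (Fin (n + 1) → 𝒢.Sv v) → ℝ) →ₗ[ℝ]
        ((Fin (n + 1) → 𝒢.SG T O) → ℝ),
      ∀ n : ℕ, 2 ≤ n →
        ∀ f : ∀ v : G.V, (Fin (n + 1) → 𝒢.Sv v) → ℝ,
          (∀ v : G.V, f v ∈ altC (𝒢.Gv v) (𝒢.Sv v) n) →
          BddAbove (Set.range fun v : G.V => supN (f v)) →
            ψ n f ∈ altC (𝒢.pi1 T) (𝒢.SG T O) n ∧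
            supN (ψ n f) ≤ (⨆ v : G.V, supN (f v)) ∧
            (∀ v : G.V, pbSet (𝒢.phiV T O hO v) n (ψ n f) = f v) ∧
            ψ (n + 1) (fun v => gcob (𝒢.Sv v) n (f v)) = gcob (𝒢.SG T O) n (ψ n f) := by
  obtain ⟨q, hq, hqφ⟩ := 𝒢.exists_isPingPong_phiV_section hT hO
  have hQ := hq.isSeparating_treeDir hT
  refine ⟨fun n => transfer (GraphOfGroups.treeDir T q) n ∘ₗ
    LinearMap.pi fun w : 𝒢.TreeVertex T => LinearMap.proj w.1, fun n hn f hf hbdd => ?_⟩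
  have halt v := (hf v).1.2
  have hinv v := (hf v).2
  have hnonneg : 0 ≤ ⨆ v, supN (f v) := Real.iSup_nonneg fun v => supN_nonneg (f v)
  have hle (v z) : |f v z| ≤ ⨆ v, supN (f v) := by
    obtain ⟨C, hC⟩ := (hf v).1.1
    exact (abs_le_supN hC z).trans (le_ciSup hbdd v)
  have hψ := abs_transfer_le (GraphOfGroups.treeDir T q) hnonneg fun w : 𝒢.TreeVertex T => hle w.1
  exact ⟨⟨⟨⟨_, hψ⟩, hQ.transfer_mem_altF hn fun w => halt w.1⟩,
      hq.transfer_treeDir_mem_invF hT hn halt hinv⟩, supN_le hnonneg hψ,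
    fun v => funext (hq.transfer_treeDir_comp hT hn halt hinv (hqφ v)),
    hQ.transfer_gcob hn fun w => halt w.1⟩

open GraphOfGroups in
/-- **The barycentric retraction (Theorem 4.4 of
Bucher–Burger–Frigerio–Iozzi–Pagliantini–Pozzetti).**
Let `𝒢` be a graph of groups on a finite graph `G` with countable vertex groups and
amenable edge groups, let `Γ = π₁(𝒢, T)`, let `S_𝒢` and `S_v` be the Bass–Serre amenable
spaces and `φ_v : S_v → S_𝒢` the natural inclusions. Then, in all degrees `n ≥ 2`, there
is a norm non-increasing (partial) chain map
`ψ^n : ⊕_{v ∈ V(G)} ℓ^∞_alt(S_v^{n+1})^{Γ_v} → ℓ^∞_alt(S_𝒢^{n+1})^Γ`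
commuting with the coboundary operators, such that `φ^n ∘ ψ^n = id`, where
`φ^n = ⊕_v φ_v^•` is induced by the pullbacks along the `φ_v`. -/
theorem barycentric_retraction_graph_of_groups
    (G : SerreGraph) [Fintype G.V] [Fintype G.E]
    (𝒢 : GraphOfGroups G)
    (hcount : ∀ v : G.V, Countable (𝒢.Gv v))
    (hamen : ∀ e : G.E, IsAmenable (𝒢.Ge e))
    (T : Set G.E) (hT : G.IsSpanningTree T)
    (O : Set G.E) (hO : G.IsOrientation O) :
    ∃ ψ : ∀ n : ℕ, (∀ v : G.V, (Fin (n + 1) → 𝒢.Sv v) → ℝ) →ₗ[ℝ]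
        ((Fin (n + 1) → 𝒢.SG T O) → ℝ),
      ∀ n : ℕ, 2 ≤ n →
        ∀ f : ∀ v : G.V, (Fin (n + 1) → 𝒢.Sv v) → ℝ,
          (∀ v : G.V, f v ∈ altC (𝒢.Gv v) (𝒢.Sv v) n) →
            ψ n f ∈ altC (𝒢.pi1 T) (𝒢.SG T O) n ∧
            supN (ψ n f) ≤ (⨆ v : G.V, supN (f v)) ∧
            (∀ v : G.V, pbSet (𝒢.phiV T O hO v) n (ψ n f) = f v) ∧
            ψ (n + 1) (fun v => gcob (𝒢.Sv v) n (f v)) = gcob (𝒢.SG T O) n (ψ n f) := by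
  obtain ⟨ψ, hψ⟩ := barycentric_retraction_graph_of_groups_general G 𝒢 T hT O hO
  exact ⟨ψ, fun n hn f hf => hψ n hn f hf (Set.finite_range _).bddAbove⟩

end GrpBC
end
end

section
/- Let (X,Y) be a pair of spaces and let β_n : C_n(Y→X) → C_n(X,Y) be the chain map β_n(u,v) = [u]. Then for every θ ∈ [0,∞) the induced map H(β_n) : (H_n(Y→X), ‖·‖_1(θ)) → (H_n(X,Y), ‖·‖_1(θ)) is an isometric isomorphism. -/
noncomputable section

namespace BddCoh

/-! ### Singular chains and homology -/

/-- The standard `n`-simplex. -/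
abbrev Δ (n : ℕ) : Set (Fin (n + 1) → ℝ) := stdSimplex ℝ (Fin (n + 1))

/-- Singular `n`-simplices in `X`. -/
abbrev SSimplex (X : Type) [TopologicalSpace X] (n : ℕ) := C(Δ n, X)

/-- Singular `n`-chains in `X` with coefficients in `R`. -/
def SChain (R : Type) [Ring R] (X : Type) [TopologicalSpace X] (n : ℕ) : Type :=
  SSimplex X n →₀ R

instance (R : Type) [Ring R] (X : Type) [TopologicalSpace X] (n : ℕ) :
    AddCommGroup (SChain R X n) := Finsupp.instAddCommGroup

instance (R : Type) [Ring R] (X : Type) [TopologicalSpace X] (n : ℕ) :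
    Module R (SChain R X n) := Finsupp.module (SSimplex X n) R

/-- Chains are finitely supported functions on simplices. -/
def chainEquiv (R : Type) [Ring R] (X : Type) [TopologicalSpace X] (n : ℕ) :
    (SSimplex X n →₀ R) ≃ₗ[R] SChain R X n := LinearEquiv.refl R (SChain R X n)

/-- The `i`-th face inclusion of standard simplices. -/
def face {n : ℕ} (i : Fin (n + 2)) : C(Δ n, Δ (n + 1)) where
  toFun x := ⟨i.insertNth 0 x.1, by
    refine ⟨fun j => ?_, ?_⟩
    · refine Fin.succAboveCases i ?_ (fun j => ?_) j
      · simp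
      · simp [x.2.1 j]
    · rw [Fin.sum_univ_succAbove _ i]
      simp [x.2.2]⟩
  continuous_toFun := by
    refine Continuous.subtype_mk ?_ _
    exact Continuous.finInsertNth i continuous_const continuous_subtype_val

variable {X : Type} [TopologicalSpace X] {R : Type} [Ring R]

/-- The `i`-th face of a singular `(n+1)`-simplex. -/
def faceOf {n : ℕ} (σ : SSimplex X (n + 1)) (i : Fin (n + 2)) : SSimplex X n :=
  σ.comp (face i)

/-- The boundary of a singular `(n+1)`-simplex, as a chain. -/
def bdryChain (R : Type) [Ring R] {n : ℕ} (σ : SSimplex X (n + 1)) : SChain R X n :=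
  chainEquiv R X n (∑ i : Fin (n + 2), Finsupp.single (faceOf σ i) ((-1 : R) ^ (i : ℕ)))

/-- The singular boundary operator. -/
def bdry (R : Type) [Ring R] (X : Type) [TopologicalSpace X] (n : ℕ) :
    SChain R X (n + 1) →ₗ[R] SChain R X n :=
  (Finsupp.linearCombination R (bdryChain R)).comp (chainEquiv R X (n + 1)).symm.toLinearMap

/-- The ℓ¹-norm of a real singular chain. -/
def l1 {n : ℕ} (c : SChain ℝ X n) : ℝ :=
  ((chainEquiv ℝ X n).symm c).sum fun _ r => |r|

/-- The submodule of chains supported on simplices with image contained in `Y`. -/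
def chainsIn (R : Type) [Ring R] (X : Type) [TopologicalSpace X] (Y : Set X) (n : ℕ) :
    Submodule R (SChain R X n) :=
  (Finsupp.supported R R {σ : SSimplex X n | Set.range σ ⊆ Y}).map (chainEquiv R X n).toLinearMap

/-- Relative `(n+1)`-cycles of the pair `(X, Y)`. -/
def relCycles (R : Type) [Ring R] (X : Type) [TopologicalSpace X] (Y : Set X) (n : ℕ) :
    Submodule R (SChain R X (n + 1)) :=
  (chainsIn R X Y n).comap (bdry R X n)

/-- Relative `(n+1)`-boundaries of the pair `(X, Y)`. -/
def relBdries (R : Type) [Ring R] (X : Type) [TopologicalSpace X] (Y : Set X) (n : ℕ) :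
    Submodule R (SChain R X (n + 1)) :=
  LinearMap.range (bdry R X (n + 1)) ⊔ chainsIn R X Y (n + 1)

/-- Relative singular homology `H_{n+1}(X, Y; R)`. -/
def relHomology (R : Type) [Ring R] (X : Type) [TopologicalSpace X] (Y : Set X) (n : ℕ) :=
  relCycles R X Y n ⧸ ((relBdries R X Y n).comap (relCycles R X Y n).subtype)

instance (Y : Set X) (n : ℕ) : AddCommGroup (relHomology R X Y n) :=
  Submodule.Quotient.addCommGroup _

instance (Y : Set X) (n : ℕ) : Module R (relHomology R X Y n) :=
  Submodule.Quotient.module _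

/-- The class of a relative cycle in relative homology. -/
def relHomClass {Y : Set X} {n : ℕ} (c : relCycles R X Y n) : relHomology R X Y n :=
  Submodule.Quotient.mk c

/-- The ℓ¹-seminorm on relative singular homology. -/
def l1HomNorm {Y : Set X} {n : ℕ} (α : relHomology ℝ X Y n) : ℝ :=
  sInf {r : ℝ | ∃ c : relCycles ℝ X Y n, relHomClass c = α ∧ r = l1 c.1}


/-! ### The homology mapping cone of a pair -/

/-- Pushforward of singular chains along a continuous map. -/
def pushChain (R : Type) [Ring R] {X X' : Type} [TopologicalSpace X] [TopologicalSpace X']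
    (f : C(X, X')) (n : ℕ) : SChain R X n →ₗ[R] SChain R X' n :=
  (chainEquiv R X' n).toLinearMap.comp
    ((Finsupp.lmapDomain R R (fun σ : SSimplex X n => f.comp σ)).comp
      (chainEquiv R X n).symm.toLinearMap)

/-- The inclusion of a subspace, as a continuous map. -/
def subIncl {X : Type} [TopologicalSpace X] (Y : Set X) : C(↥Y, X) :=
  ⟨Subtype.val, continuous_subtype_val⟩

lemma pushChain_subIncl_mem_chainsIn {X : Type} [TopologicalSpace X] (Y : Set X) {n : ℕ}
    (v : SChain ℝ ↥Y n) : pushChain ℝ (subIncl Y) n v ∈ chainsIn ℝ X Y n := by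
  classical
  have hw : Finsupp.mapDomain (fun σ : SSimplex ↥Y n => (subIncl Y).comp σ)
      ((chainEquiv ℝ ↥Y n).symm v) ∈
      Finsupp.supported ℝ ℝ {σ : SSimplex X n | Set.range ⇑σ ⊆ Y} := by
    rw [Finsupp.mem_supported]
    intro σ hσ
    have := Finsupp.mapDomain_support hσ
    obtain ⟨τ, -, rfl⟩ := Finset.mem_image.1 this
    rintro - ⟨x, rfl⟩
    exact (τ x).2
  exact Submodule.mem_map_of_mem hw

variable (X : Type) [TopologicalSpace X] (Y : Set X)

/-- Chains of the mapping cone: `ConeChain X Y n = C_{n+1}(Y → X) = C_{n+1}(X) ⊕ C_n(Y)`. -/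
abbrev ConeChain (n : ℕ) : Type := SChain ℝ X (n + 1) × SChain ℝ ↥Y n

/-- The differential of the mapping cone complex. -/
def coneD (n : ℕ) : ConeChain X Y (n + 1) →ₗ[ℝ] ConeChain X Y n :=
  LinearMap.prod
    ((bdry ℝ X (n + 1)).comp (LinearMap.fst ℝ _ _) +
      (pushChain ℝ (subIncl Y) (n + 1)).comp (LinearMap.snd ℝ _ _))
    (-((bdry ℝ ↥Y n).comp (LinearMap.snd ℝ _ _)))

/-- The bottom differential of the mapping cone complex. -/
def coneD0 : ConeChain X Y 0 →ₗ[ℝ] SChain ℝ X 0 :=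
  (bdry ℝ X 0).comp (LinearMap.fst ℝ _ _) +
    (pushChain ℝ (subIncl Y) 0).comp (LinearMap.snd ℝ _ _)

/-- Cycles of the mapping cone. -/
def coneCycles : ∀ n : ℕ, Submodule ℝ (ConeChain X Y n)
  | 0 => LinearMap.ker (coneD0 X Y)
  | (m + 1) => LinearMap.ker (coneD X Y m)

/-- Boundaries of the mapping cone. -/
def coneBdries (n : ℕ) : Submodule ℝ (ConeChain X Y n) := LinearMap.range (coneD X Y n)

/-- The homology `H_{n+1}(Y → X)` of the mapping cone. -/
def coneHomology (n : ℕ) :=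
  coneCycles X Y n ⧸ ((coneBdries X Y n).comap (coneCycles X Y n).subtype)

instance (n : ℕ) : AddCommGroup (coneHomology X Y n) := Submodule.Quotient.addCommGroup _
instance (n : ℕ) : Module ℝ (coneHomology X Y n) := Submodule.Quotient.module _

variable {X Y}

/-- The class of a cone cycle in the homology of the mapping cone. -/
def coneHomClass {n : ℕ} (c : coneCycles X Y n) : coneHomology X Y n :=
  Submodule.Quotient.mk c

/-- The seminorm induced on the homology of the mapping cone by the norm
`‖(u, v)‖₁(θ) = ‖u‖₁ + θ‖v‖₁`. -/
def coneThetaNorm {n : ℕ} (θ : ℝ) (α : coneHomology X Y n) : ℝ :=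
  sInf {r : ℝ | ∃ c : coneCycles X Y n, coneHomClass c = α ∧ r = l1 c.1.1 + θ * l1 c.1.2}

lemma coneCycles_fst_mem {n : ℕ} (c : ConeChain X Y n) (hc : c ∈ coneCycles X Y n) :
    c.1 ∈ relCycles ℝ X Y n := by
  cases n with
  | zero =>
    have h : bdry ℝ X 0 c.1 + pushChain ℝ (subIncl Y) 0 c.2 = 0 := hc
    have : bdry ℝ X 0 c.1 = -(pushChain ℝ (subIncl Y) 0 c.2) :=
      eq_neg_of_add_eq_zero_left h
    show bdry ℝ X 0 c.1 ∈ chainsIn ℝ X Y 0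
    rw [this]
    exact neg_mem (pushChain_subIncl_mem_chainsIn Y c.2)
  | succ m =>
    have h : coneD X Y m c = 0 := hc
    have h1 : bdry ℝ X (m + 1) c.1 + pushChain ℝ (subIncl Y) (m + 1) c.2 = 0 :=
      congrArg Prod.fst h
    have : bdry ℝ X (m + 1) c.1 = -(pushChain ℝ (subIncl Y) (m + 1) c.2) :=
      eq_neg_of_add_eq_zero_left h1
    show bdry ℝ X (m + 1) c.1 ∈ chainsIn ℝ X Y (m + 1)
    rw [this]
    exact neg_mem (pushChain_subIncl_mem_chainsIn Y c.2)

/-- The chain map `βₙ : C_n(Y → X) → C_n(X, Y)`, `β(u, v) = [u]`, restricted to cycles. -/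
def coneBetaZ (n : ℕ) : coneCycles X Y n →ₗ[ℝ] relCycles ℝ X Y n :=
  (LinearMap.fst ℝ (SChain ℝ X (n + 1)) (SChain ℝ ↥Y n)).restrict
    (fun c hc => coneCycles_fst_mem c hc)

/-- The map `H(βₙ) : H_{n+1}(Y → X) → H_{n+1}(X, Y)` induced in homology by
`β(u, v) = [u]`. -/
def coneBetaH (n : ℕ) : coneHomology X Y n →ₗ[ℝ] relHomology ℝ X Y n := by
  refine Submodule.mapQ _ _ (coneBetaZ n) ?_
  intro x hx
  obtain ⟨d, hd⟩ := hx
  show ((coneBetaZ n) x).1 ∈ relBdries ℝ X Y n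
  have hval : (((coneBetaZ n) x : relCycles ℝ X Y n) : SChain ℝ X (n + 1)) = x.1.1 := rfl
  have hx' : (x : ConeChain X Y n) = coneD X Y n d := hd.symm
  have hD : (coneD X Y n d).1
      = bdry ℝ X (n + 1) d.1 + pushChain ℝ (subIncl Y) (n + 1) d.2 := rfl
  rw [hval, hx', hD]
  exact add_mem (Submodule.mem_sup_left ⟨d.1, rfl⟩)
    (Submodule.mem_sup_right (pushChain_subIncl_mem_chainsIn Y d.2))

/-- Gromov's one-parameter family of seminorms: the seminorm induced on relative homology
`H_{n+1}(X, Y; ℝ)` by the norm `‖c‖₁(θ) = ‖c‖₁ + θ‖∂c‖₁` on singular chains. -/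
def l1ThetaHomNorm {X : Type} [TopologicalSpace X] {Y : Set X} {n : ℕ} (θ : ℝ)
    (α : relHomology ℝ X Y n) : ℝ :=
  sInf {r : ℝ | ∃ c : relCycles ℝ X Y n,
    relHomClass c = α ∧ r = l1 c.1 + θ * l1 (bdry ℝ X n c.1)}

/-! A cone chain `(u, v)` is a cycle exactly when `∂u = -i(v)`; the second condition `∂v = 0` then
follows from `∂∂ = 0` because `i` is injective on chains. As `i` identifies `C(Y)` isometrically
with the chains of `X` supported in `Y`, every relative cycle `u` is the first component of a cone
cycle `(u, v)`, and `‖v‖₁ = ‖∂u‖₁` for each such cycle. If moreover `u = ∂a + i(b)`, then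
`(u, v) = d̄(a, b)`, so cone boundaries correspond to relative boundaries. Hence `H(β)` is bijective
and the two seminorms are infima of the same set of reals. -/

section Simplices

variable {n : ℕ}

theorem insertNth_succAbove_insertNth_predAbove {α : Type*} (i : Fin (n + 2)) (j : Fin (n + 1))
    (a b : α) (x : Fin n → α) :
    (i.succAbove j).insertNth (α := fun _ ↦ α) a ((j.predAbove i).insertNth (α := fun _ ↦ α) b x) =
      i.insertNth (α := fun _ ↦ α) b (j.insertNth (α := fun _ ↦ α) a x) := by
  rw [Fin.eq_insertNth_iff]
  constructor
  · conv_lhs => arg 4; rw [← Fin.succAbove_succAbove_predAbove i j]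
    rw [Fin.insertNth_apply_succAbove, Fin.insertNth_apply_same]
  · rw [Fin.eq_insertNth_iff]
    refine ⟨Fin.insertNth_apply_same .., funext fun k ↦ ?_⟩
    simp only [Fin.removeNth_apply]
    rw [← Fin.succAbove_succAbove_succAbove_predAbove i j k, Fin.insertNth_apply_succAbove,
      Fin.insertNth_apply_succAbove]

theorem face_succAbove_comp_face_predAbove (i : Fin (n + 3)) (j : Fin (n + 2)) :
    (face (i.succAbove j)).comp (face (j.predAbove i)) = (face i).comp (face j) :=
  ContinuousMap.ext fun x ↦
    Subtype.ext (insertNth_succAbove_insertNth_predAbove i j (0 : ℝ) 0 x.1)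

theorem faceOf_succAbove_faceOf_predAbove (σ : SSimplex X (n + 2)) (i : Fin (n + 3))
    (j : Fin (n + 2)) :
    faceOf (faceOf σ (i.succAbove j)) (j.predAbove i) = faceOf (faceOf σ i) j :=
  congrArg σ.comp (face_succAbove_comp_face_predAbove i j)

-- The involution `(i, j) ↦ (i.succAbove j, j.predAbove i)` reverses signs and has no fixed points.
theorem sum_sum_neg_one_pow_smul_eq_zero {M : Type*} [AddCommGroup M] [Module R M]
    (f : Fin (n + 2) → Fin (n + 1) → M)
    (hf : ∀ i j, f (i.succAbove j) (j.predAbove i) = f i j) :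
    ∑ i : Fin (n + 2), ∑ j : Fin (n + 1), (-1 : R) ^ (i + j : ℕ) • f i j = 0 := by
  rw [← Fintype.sum_prod_type']
  refine Finset.sum_involution (fun p _ ↦ (p.1.succAbove p.2, p.2.predAbove p.1)) ?_ ?_ ?_ ?_
  · rintro ⟨i, j⟩ -
    simp only [hf, Fin.neg_one_pow_succAbove_add_predAbove, neg_smul, add_neg_cancel]
  · rintro ⟨i, j⟩ - - h
    exact Fin.succAbove_ne i j (congrArg Prod.fst h)
  · exact fun _ _ ↦ Finset.mem_univ _
  · rintro ⟨i, j⟩ -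
    exact Prod.ext (Fin.succAbove_succAbove_predAbove i j) (Fin.predAbove_predAbove_succAbove i j)

end Simplices

section Chains

variable {X' : Type} [TopologicalSpace X'] {n : ℕ}

/-- A singular simplex `σ` regarded as a chain, with coefficient `1`: the basis vector of `SChain`
indexed by `σ`. -/
def simplexChain (R : Type) [Ring R] (σ : SSimplex X n) : SChain R X n :=
  chainEquiv R X n (Finsupp.single σ 1)

theorem SChain.linearMap_ext {M : Type*} [AddCommGroup M] [Module R M] {f g : SChain R X n →ₗ[R] M}
    (h : ∀ σ, f (simplexChain R σ) = g (simplexChain R σ)) : f = g :=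
  Finsupp.lhom_ext' fun σ ↦ LinearMap.ext_ring (h σ)

theorem bdry_simplexChain (σ : SSimplex X (n + 1)) :
    bdry R X n (simplexChain R σ) =
      ∑ i : Fin (n + 2), (-1 : R) ^ (i : ℕ) • simplexChain R (faceOf σ i) := by
  have bdry_eq : bdry R X n (simplexChain R σ) = bdryChain R σ :=
    (Finsupp.linearCombination_single R 1 σ).trans (one_smul R _)
  rw [bdry_eq, bdryChain, map_sum]
  simp only [simplexChain, ← map_smul, Finsupp.smul_single_one]

theorem pushChain_simplexChain (f : C(X, X')) (σ : SSimplex X n) :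
    pushChain R f n (simplexChain R σ) = simplexChain R (f.comp σ) :=
  congrArg (chainEquiv R X' n) Finsupp.mapDomain_single

theorem bdry_pushChain (f : C(X, X')) (c : SChain R X (n + 1)) :
    bdry R X' n (pushChain R f (n + 1) c) = pushChain R f n (bdry R X n c) := by
  suffices h : bdry R X' n ∘ₗ pushChain R f (n + 1) = pushChain R f n ∘ₗ bdry R X n from
    LinearMap.congr_fun h c
  refine SChain.linearMap_ext fun σ ↦ ?_
  simp only [LinearMap.comp_apply, pushChain_simplexChain, bdry_simplexChain, map_sum, map_smul]
  rfl

theorem bdry_bdry (c : SChain R X (n + 2)) : bdry R X n (bdry R X (n + 1) c) = 0 := by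
  suffices h : bdry R X n ∘ₗ bdry R X (n + 1) = 0 from LinearMap.congr_fun h c
  refine SChain.linearMap_ext fun σ ↦ ?_
  simp only [LinearMap.comp_apply, bdry_simplexChain, map_sum, map_smul, Finset.smul_sum, smul_smul,
    ← pow_add, LinearMap.zero_apply]
  exact sum_sum_neg_one_pow_smul_eq_zero (fun i j ↦ simplexChain R (faceOf (faceOf σ i) j))
    fun i j ↦ congrArg (simplexChain R) (faceOf_succAbove_faceOf_predAbove σ i j)

theorem pushChain_injective {f : C(X, X')} (hf : Function.Injective f) :
    Function.Injective (pushChain R f n) :=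
  Finsupp.mapDomain_injective fun _ _ ↦ (ContinuousMap.cancel_left hf).1

theorem l1_pushChain {f : C(X, X')} (hf : Function.Injective f) (c : SChain ℝ X n) :
    l1 (pushChain ℝ f n c) = l1 c :=
  Finsupp.sum_mapDomain_index_inj (s := (chainEquiv ℝ X n).symm c) (h := fun _ r ↦ |r|)
    fun _ _ ↦ (ContinuousMap.cancel_left hf).1

theorem l1_neg (c : SChain ℝ X n) : l1 (-c) = l1 c := by
  rw [l1, l1, map_neg, Finsupp.sum_neg_index fun _ ↦ abs_zero]
  simp only [abs_neg]

theorem subIncl_injective : Function.Injective (subIncl Y) :=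
  Subtype.val_injective

theorem range_subIncl_comp :
    Set.range (fun σ : SSimplex Y n ↦ (subIncl Y).comp σ) =
      {σ : SSimplex X n | Set.range σ ⊆ Y} := by
  ext σ
  constructor
  · rintro ⟨τ, rfl⟩ _ ⟨x, rfl⟩
    exact (τ x).2
  · intro hσ
    exact ⟨⟨fun x ↦ ⟨σ x, hσ ⟨x, rfl⟩⟩, by fun_prop⟩, rfl⟩

theorem range_pushChain_subIncl :
    LinearMap.range (pushChain R (subIncl Y) n) = chainsIn R X Y n := by
  have range_lmapDomain :
      LinearMap.range (Finsupp.lmapDomain R R fun σ : SSimplex Y n ↦ (subIncl Y).comp σ) =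
        Finsupp.supported R R {σ : SSimplex X n | Set.range σ ⊆ Y} := by
    rw [← Submodule.map_top, ← Finsupp.supported_univ, Finsupp.lmapDomain_supported,
      Set.image_univ, range_subIncl_comp]
  rw [pushChain, LinearMap.range_comp, LinearMap.range_comp_of_range_eq_top _ (LinearEquiv.range _),
    range_lmapDomain, chainsIn]

end Chains

section Cone

variable {n : ℕ}

theorem mem_coneCycles_iff {c : ConeChain X Y n} :
    c ∈ coneCycles X Y n ↔ bdry ℝ X n c.1 = -pushChain ℝ (subIncl Y) n c.2 := by
  rw [← add_eq_zero_iff_eq_neg]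
  cases n with
  | zero => exact Iff.rfl
  | succ m =>
    refine ⟨congrArg Prod.fst, fun h ↦ Prod.ext h (neg_eq_zero.2 ?_)⟩
    refine pushChain_injective subIncl_injective ?_
    calc pushChain ℝ (subIncl Y) m (bdry ℝ Y m c.2)
        = bdry ℝ X m (bdry ℝ X (m + 1) c.1 + pushChain ℝ (subIncl Y) (m + 1) c.2) := by
          rw [map_add, bdry_bdry, zero_add, bdry_pushChain]
      _ = pushChain ℝ (subIncl Y) m 0 := by rw [h, map_zero, map_zero]

theorem l1_bdry_fst_of_mem_coneCycles {c : ConeChain X Y n} (hc : c ∈ coneCycles X Y n) :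
    l1 (bdry ℝ X n c.1) = l1 c.2 := by
  rw [mem_coneCycles_iff.1 hc, l1_neg, l1_pushChain subIncl_injective]

theorem mem_coneBdries_of_fst_mem_relBdries {c : ConeChain X Y n} (hc : c ∈ coneCycles X Y n)
    (hrel : c.1 ∈ relBdries ℝ X Y n) : c ∈ coneBdries X Y n := by
  rw [relBdries, ← range_pushChain_subIncl] at hrel
  obtain ⟨_, ⟨a, rfl⟩, _, ⟨b, rfl⟩, hab⟩ := Submodule.mem_sup.1 hrel
  refine ⟨(a, b), Prod.ext hab (pushChain_injective subIncl_injective ?_)⟩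
  calc pushChain ℝ (subIncl Y) n (-bdry ℝ Y n b)
      = -bdry ℝ X n (bdry ℝ X (n + 1) a + pushChain ℝ (subIncl Y) (n + 1) b) := by
        rw [map_add, bdry_bdry, zero_add, bdry_pushChain, map_neg]
    _ = pushChain ℝ (subIncl Y) n c.2 := by rw [hab, mem_coneCycles_iff.1 hc, neg_neg]

theorem coneBetaZ_surjective : Function.Surjective (coneBetaZ (X := X) (Y := Y) n) := by
  rintro ⟨u, hu⟩
  rw [relCycles, ← range_pushChain_subIncl] at hu
  obtain ⟨v, hv⟩ := hu
  have hcycle : (u, -v) ∈ coneCycles X Y n := by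
    rw [mem_coneCycles_iff, map_neg, neg_neg, hv]
  exact ⟨⟨(u, -v), hcycle⟩, rfl⟩

theorem coe_coneBetaZ (c : coneCycles X Y n) : (coneBetaZ n c : SChain ℝ X (n + 1)) = c.1.1 :=
  rfl

theorem coneBetaH_coneHomClass (c : coneCycles X Y n) :
    coneBetaH n (coneHomClass c) = relHomClass (coneBetaZ n c) :=
  rfl

theorem coneHomClass_surjective : Function.Surjective (coneHomClass (X := X) (Y := Y) (n := n)) :=
  Submodule.Quotient.mk_surjective _

theorem relHomClass_surjective :
    Function.Surjective (relHomClass (R := R) (X := X) (Y := Y) (n := n)) :=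
  Submodule.Quotient.mk_surjective _

theorem coneHomClass_eq_zero_iff {c : coneCycles X Y n} :
    coneHomClass c = 0 ↔ (c : ConeChain X Y n) ∈ coneBdries X Y n :=
  Submodule.Quotient.mk_eq_zero ((coneBdries X Y n).comap (coneCycles X Y n).subtype)

theorem relHomClass_eq_zero_iff {c : relCycles R X Y n} :
    relHomClass c = 0 ↔ (c : SChain R X (n + 1)) ∈ relBdries R X Y n :=
  Submodule.Quotient.mk_eq_zero ((relBdries R X Y n).comap (relCycles R X Y n).subtype)

theorem coneBetaH_injective : Function.Injective (coneBetaH (X := X) (Y := Y) n) := by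
  refine (injective_iff_map_eq_zero _).2 fun α hα ↦ ?_
  obtain ⟨c, rfl⟩ := coneHomClass_surjective α
  rw [coneBetaH_coneHomClass, relHomClass_eq_zero_iff, coe_coneBetaZ] at hα
  exact coneHomClass_eq_zero_iff.2 (mem_coneBdries_of_fst_mem_relBdries c.2 hα)

theorem coneBetaH_surjective : Function.Surjective (coneBetaH (X := X) (Y := Y) n) := by
  intro γ
  obtain ⟨u, rfl⟩ := relHomClass_surjective γ
  obtain ⟨c, rfl⟩ := coneBetaZ_surjective u
  exact ⟨coneHomClass c, coneBetaH_coneHomClass c⟩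

theorem l1ThetaHomNorm_coneBetaH (θ : ℝ) (α : coneHomology X Y n) :
    l1ThetaHomNorm θ (coneBetaH n α) = coneThetaNorm θ α := by
  simp only [l1ThetaHomNorm, coneThetaNorm, coneBetaZ_surjective.exists, ← coneBetaH_coneHomClass,
    coneBetaH_injective.eq_iff, coe_coneBetaZ, l1_bdry_fst_of_mem_coneCycles (Subtype.prop _)]

end Cone

/-- **The mapping cone computes the Gromov seminorms on relative homology.**
For any pair of spaces `(X, Y)`, any `θ ∈ [0, ∞)` and any degree `n + 1 ≥ 1`, the map
`H(β) : H_{n+1}(Y → X) → H_{n+1}(X, Y)` induced by the chain map `β(u, v) = [u]` is an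
isometric isomorphism with respect to the seminorms induced by
`‖(u, v)‖₁(θ) = ‖u‖₁ + θ‖v‖₁` on the mapping cone and by `‖c‖₁(θ) = ‖c‖₁ + θ‖∂c‖₁` on
relative chains. -/
theorem coneBetaH_isometric_isomorphism
    (X : Type) [TopologicalSpace X] (Y : Set X)
    (θ : ℝ) (hθ : 0 ≤ θ) (n : ℕ) :
    Function.Bijective (coneBetaH (X := X) (Y := Y) n) ∧
    ∀ α : coneHomology X Y n, l1ThetaHomNorm θ (coneBetaH n α) = coneThetaNorm θ α :=
  ⟨⟨coneBetaH_injective, coneBetaH_surjective⟩, l1ThetaHomNorm_coneBetaH θ⟩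

end BddCoh
end
end
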